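/- arXiv:2206.06742 — 5 statements merged into one kernel-verified Lean document; each statement's English description precedes it below -/
import Mathlib

section
/- Assume ρ > 0 and that the Dirichlet eigenpair hypothesis holds for (Ω, λ₁, φ). If there exists u ∈ C²(C_Ω^ρ) with u > 0 on C_Ω^ρ and −Δu(x) − μ|x|^{−2}u(x) ≥ 0 for all x ∈ C_Ω^ρ, then μ ≤ C_{H,Ω} = λ₁ + ((N−2)/2)². -/
open MeasureTheory Real Set
open scoped ENNReal NNReal

noncomputable section

/-- Euclidean space `ℝ^N`. -/
abbrev Euc (N : ℕ) := EuclideanSpace ℝ (Fin N)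

/-- The Euclidean Laplacian `Δu(x) = ∑ ∂²u/∂xᵢ²(x)`, the trace of the Hessian. -/
def lap (N : ℕ) (u : Euc N → ℝ) (x : Euc N) : ℝ :=
  ∑ i : Fin N,
    iteratedFDeriv ℝ 2 u x ![EuclideanSpace.single i 1, EuclideanSpace.single i 1]

/-- The open cone `C_Ω^ρ = {x : |x| > ρ, x/|x| ∈ Ω}`. -/
def coneGT (N : ℕ) (ρ : ℝ) (Ω : Set (Euc N)) : Set (Euc N) :=
  {x | ρ < ‖x‖ ∧ ‖x‖⁻¹ • x ∈ Ω}

/-- The full open cone `C_Ω = {x ≠ 0 : x/|x| ∈ Ω}`. -/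
def cone (N : ℕ) (Ω : Set (Euc N)) : Set (Euc N) :=
  {x | x ≠ 0 ∧ ‖x‖⁻¹ • x ∈ Ω}

/-- `Ω` is a nonempty, connected, relatively open subset of the unit sphere `S^{N-1}`. -/
def IsConeDomain (N : ℕ) (Ω : Set (Euc N)) : Prop :=
  Ω ⊆ Metric.sphere (0 : Euc N) 1 ∧ IsConnected Ω ∧
    IsOpen {ω : Metric.sphere (0 : Euc N) 1 | (ω : Euc N) ∈ Ω}

/-- The convolution `(|x|^{-α} * f)(x) = ∫_{C_Ω^ρ} f(y)|x-y|^{-α} dy`, valued in `[0,∞]`. -/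
def rieszConv (N : ℕ) (α ρ : ℝ) (Ω : Set (Euc N)) (f : Euc N → ℝ) (x : Euc N) : ℝ≥0∞ :=
  ∫⁻ y in coneGT N ρ Ω, ENNReal.ofReal (f y * ‖x - y‖ ^ (-α))

/-- Dirichlet eigenpair hypothesis for `(Ω, λ₁, φ)`: `φ` is continuous on the closure of `Ω`,
positive on `Ω`, vanishing on the relative boundary, with maximum `1`, and its 0-homogeneous
extension `Φ(x) = φ(x/|x|)` is `C²` on the open cone and satisfies `ΔΦ = -λ₁|x|⁻²Φ`. -/
structure DirichletEigenpair (N : ℕ) (Ω : Set (Euc N)) (lam1 : ℝ) (φ : Euc N → ℝ) : Prop where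
  contOn : ContinuousOn φ (closure Ω)
  pos : ∀ ω ∈ Ω, 0 < φ ω
  bdryZero : ∀ ω ∈ closure Ω \ Ω, φ ω = 0
  le_one : ∀ ω ∈ closure Ω, φ ω ≤ 1
  max_one : ∃ ω ∈ closure Ω, φ ω = 1
  smoothExt : ContDiffOn ℝ 2 (fun x => φ (‖x‖⁻¹ • x)) (cone N Ω)
  eigen : ∀ x ∈ cone N Ω,
    lap N (fun y => φ (‖y‖⁻¹ • y)) x = -lam1 * ‖x‖ ^ (-(2:ℝ)) * φ (‖x‖⁻¹ • x)

/-- The Hardy constant `C_{H,Ω} = λ₁ + ((N-2)/2)²`. -/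
def CHconst (N : ℕ) (lam1 : ℝ) : ℝ := lam1 + (((N : ℝ) - 2) / 2) ^ 2

/-- The smaller root `γ_*` of `γ(γ + N - 2) = λ₁ - μ`. -/
def gammaStar (N : ℕ) (lam1 μ : ℝ) : ℝ :=
  (-((N : ℝ) - 2) - Real.sqrt (((N : ℝ) - 2) ^ 2 + 4 * (lam1 - μ))) / 2

/-- A positive (classical) solution of `(E) : -Δu - μ|x|⁻²u ≥ (|x|^{-α} * uᵖ) u^q` in `C_Ω^ρ`. -/
def IsPosSolE (N : ℕ) (ρ μ α p q : ℝ) (Ω : Set (Euc N)) (u : Euc N → ℝ) : Prop :=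
  ContDiffOn ℝ 2 u (coneGT N ρ Ω) ∧
  ContinuousOn u (closure (coneGT N ρ Ω)) ∧
  (∀ x ∈ coneGT N ρ Ω, 0 < u x) ∧
  (∀ x ∈ coneGT N ρ Ω, rieszConv N α ρ Ω (fun y => u y ^ p) x < ⊤) ∧
  (∀ x ∈ coneGT N ρ Ω,
    (rieszConv N α ρ Ω (fun y => u y ^ p) x).toReal * u x ^ q ≤
      -lap N u x - μ * ‖x‖ ^ (-(2:ℝ)) * u x)

/-- A positive solution of `(Z) : -Δu - μ|x|⁻²u ≥ (∫_{C_Ω^ρ} uᵖ) u^q` in `C_Ω^ρ`. -/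
def IsPosSolZ (N : ℕ) (ρ μ p q : ℝ) (Ω : Set (Euc N)) (u : Euc N → ℝ) : Prop :=
  ContDiffOn ℝ 2 u (coneGT N ρ Ω) ∧
  ContinuousOn u (closure (coneGT N ρ Ω)) ∧
  (∀ x ∈ coneGT N ρ Ω, 0 < u x) ∧
  (∫⁻ y in coneGT N ρ Ω, ENNReal.ofReal (u y ^ p)) < ⊤ ∧
  (∀ x ∈ coneGT N ρ Ω,
    (∫⁻ y in coneGT N ρ Ω, ENNReal.ofReal (u y ^ p)).toReal * u x ^ q ≤
      -lap N u x - μ * ‖x‖ ^ (-(2:ℝ)) * u x)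

/-- A positive solution `(u, v)` of the system `(S)` in `C_Ω^ρ`. -/
def IsPosSolS (N : ℕ) (ρ μ α p q s : ℝ) (Ω : Set (Euc N)) (u v : Euc N → ℝ) : Prop :=
  ContDiffOn ℝ 2 u (coneGT N ρ Ω) ∧ ContinuousOn u (closure (coneGT N ρ Ω)) ∧
  ContDiffOn ℝ 2 v (coneGT N ρ Ω) ∧ ContinuousOn v (closure (coneGT N ρ Ω)) ∧
  (∀ x ∈ coneGT N ρ Ω, 0 < u x) ∧ (∀ x ∈ coneGT N ρ Ω, 0 < v x) ∧
  (∀ x ∈ coneGT N ρ Ω, rieszConv N α ρ Ω (fun y => v y ^ p) x < ⊤) ∧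
  (∀ x ∈ coneGT N ρ Ω,
    (rieszConv N α ρ Ω (fun y => v y ^ p) x).toReal * v x ^ q ≤
      -lap N u x - μ * ‖x‖ ^ (-(2:ℝ)) * u x) ∧
  (∀ x ∈ coneGT N ρ Ω, u x ^ s ≤ -lap N v x - μ * ‖x‖ ^ (-(2:ℝ)) * v x)

open scoped Topology
def FF (t : ℝ) : ℝ := ∫ x in (0:ℝ)..t, Real.smoothTransition x

lemma FF_deriv (t : ℝ) : HasDerivAt FF (Real.smoothTransition t) t := by
  exact intervalIntegral.integral_hasDerivAt_right
    (Real.smoothTransition.continuous.intervalIntegrable _ _)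
    (Real.smoothTransition.continuous.stronglyMeasurableAtFilter _ _)
    Real.smoothTransition.continuous.continuousAt

lemma FF_zero {t : ℝ} (ht : t ≤ 0) : FF t = 0 := by
  unfold FF
  rw [intervalIntegral.integral_congr (g := fun _ => (0:ℝ))]
  · simp
  · intro x hx
    rw [Set.uIcc_of_ge ht] at hx
    exact Real.smoothTransition.zero_of_nonpos hx.2

lemma FF_nonneg (t : ℝ) : 0 ≤ FF t := by
  rcases le_total t 0 with ht | ht
  · rw [FF_zero ht]
  · exact intervalIntegral.integral_nonneg ht (fun x _ => Real.smoothTransition.nonneg x)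

lemma FF_le {t : ℝ} (ht : 0 ≤ t) : FF t ≤ t := by
  have := intervalIntegral.integral_mono_on ht
    (Real.smoothTransition.continuous.intervalIntegrable 0 t)
    (continuous_const.intervalIntegrable (μ := volume) (u := fun _ => (1:ℝ)) 0 t)
    (fun x _ => Real.smoothTransition.le_one x)
  simpa [FF] using this

lemma FF_ge {t : ℝ} (ht : 1 ≤ t) : t - 1 ≤ FF t := by
  have h1 : FF t = FF 1 + ∫ x in (1:ℝ)..t, Real.smoothTransition x := by
    unfold FF
    rw [intervalIntegral.integral_add_adjacent_intervals] <;>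
    exact (Real.smoothTransition.continuous.intervalIntegrable _ _)
  have h2 : ∫ x in (1:ℝ)..t, Real.smoothTransition x = ∫ x in (1:ℝ)..t, (1:ℝ) := by
    apply intervalIntegral.integral_congr
    intro x hx
    rw [Set.uIcc_of_le ht] at hx
    exact Real.smoothTransition.one_of_one_le hx.1
  rw [h1, h2]
  have := FF_nonneg 1
  simp; linarith

/-- packaged cutoff -/
lemma exists_cutoff (ε : ℝ) (hε : 0 < ε) : ∃ f h h' : ℝ → ℝ,
    (∀ s, HasDerivAt f (h s) s) ∧ (∀ s, HasDerivAt h (h' s) s) ∧ ContDiff ℝ 1 h ∧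
    ContDiff ℝ 1 f ∧
    (∀ s, 0 ≤ h' s) ∧ (∀ s, 0 ≤ f s) ∧ (∀ s, s ≤ ε → f s = 0) ∧ (∀ s, 0 < s → f s ≤ s) ∧
    (∀ s, s - 2 * ε ≤ f s) ∧ (∀ s, 0 < s → |s * h s - f s| ≤ 2 * ε) := by
  have hC : ContDiff ℝ 1 (fun s : ℝ => Real.smoothTransition (s / ε - 1)) :=
    Real.smoothTransition.contDiff.comp ((contDiff_id.div_const ε).sub contDiff_const)
  have hlin : ∀ s : ℝ, HasDerivAt (fun s : ℝ => s / ε - 1) (1 / ε) s := fun s =>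
    ((hasDerivAt_id s).div_const ε).sub_const 1
  have hf : ∀ s, HasDerivAt (fun s => ε * FF (s / ε - 1)) (Real.smoothTransition (s / ε - 1)) s := by
    intro s
    have := ((FF_deriv (s / ε - 1)).comp s (hlin s)).const_mul ε
    have e : ε * (Real.smoothTransition (s / ε - 1) * (1 / ε)) = Real.smoothTransition (s / ε - 1) := by
      field_simp
    rw [e] at this
    exact this
  have h0 : ∀ s, s ≤ ε → ε * FF (s / ε - 1) = 0 := by
    intro s hs
    have : s / ε ≤ 1 := (div_le_one hε).2 hs
    rw [FF_zero (by linarith), mul_zero]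
  have hnn : ∀ s, 0 ≤ ε * FF (s / ε - 1) := fun s => mul_nonneg hε.le (FF_nonneg _)
  have hle : ∀ s, 0 < s → ε * FF (s / ε - 1) ≤ s := by
    intro s hs
    rcases le_total s ε with h | h
    · rw [h0 s h]; exact hs.le
    · have : 1 ≤ s / ε := (one_le_div hε).2 h
      have h3 := FF_le (t := s / ε - 1) (by linarith)
      calc ε * FF (s / ε - 1) ≤ ε * (s / ε - 1) := by gcongr
        _ = s - ε := by field_simp
        _ ≤ s := by linarith
  have hge : ∀ s, s - 2 * ε ≤ ε * FF (s / ε - 1) := by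
    intro s
    rcases le_total s (2 * ε) with h | h
    · linarith [hnn s]
    · have : 2 ≤ s / ε := (le_div_iff₀ hε).2 h
      have h3 := FF_ge (t := s / ε - 1) (by linarith)
      calc s - 2 * ε = ε * (s / ε - 1 - 1) := by field_simp; ring
        _ ≤ _ := by gcongr
  refine ⟨fun s => ε * FF (s / ε - 1), fun s => Real.smoothTransition (s / ε - 1),
    deriv (fun s : ℝ => Real.smoothTransition (s / ε - 1)), hf, ?_, hC, ?_, ?_, hnn, h0, hle, hge, ?_⟩
  · intro s
    exact (hC.differentiable one_ne_zero s).hasDerivAt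
  · rw [contDiff_one_iff_deriv]
    refine ⟨fun s => (hf s).differentiableAt, ?_⟩
    have : deriv (fun s => ε * FF (s / ε - 1)) = fun s => Real.smoothTransition (s / ε - 1) :=
      funext fun s => (hf s).deriv
    rw [this]; exact hC.continuous
  · intro s
    apply Monotone.deriv_nonneg
    intro x y hxy
    exact Real.smoothTransition.monotone (by gcongr)
  · intro s hs
    rcases le_total s (2 * ε) with h | h
    · have h1 := Real.smoothTransition.nonneg (s / ε - 1)
      have h2 := Real.smoothTransition.le_one (s / ε - 1)
      have h3 := hle s hs
      have h4 := hnn s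
      have : s * Real.smoothTransition (s / ε - 1) ≤ s := by nlinarith
      have : 0 ≤ s * Real.smoothTransition (s / ε - 1) := by positivity
      rw [abs_le]; constructor <;> linarith
    · have : 2 ≤ s / ε := (le_div_iff₀ hε).2 h
      have h1 : Real.smoothTransition (s / ε - 1) = 1 :=
        Real.smoothTransition.one_of_one_le (by linarith)
      simp only [h1]
      have h3 := hle s hs
      have h4 := hge s
      rw [abs_le]; constructor <;> linarith

lemma div_calc {E : Type*} [NormedAddCommGroup E] [NormedSpace ℝ E] (f h h' : ℝ → ℝ)
    (hf : ∀ s, HasDerivAt f (h s) s) (hh : ∀ s, HasDerivAt h (h' s) s)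
    (W u : E → ℝ) (x e : E) (hW : ContDiffAt ℝ 2 W x) (hu : ContDiffAt ℝ 2 u x) (hux : u x ≠ 0) :
    fderiv ℝ (fun y => f (W y) * h (W y) * fderiv ℝ W y e - f (W y) ^ 2 * fderiv ℝ u y e / u y) x e
      = (h (W x) * fderiv ℝ W x e - f (W x) * fderiv ℝ u x e / u x) ^ 2
        + f (W x) * h' (W x) * fderiv ℝ W x e ^ 2
        + f (W x) * h (W x) * fderiv ℝ (fderiv ℝ W) x e e
        - f (W x) ^ 2 * fderiv ℝ (fderiv ℝ u) x e e / u x := by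
  have hW1 : HasFDerivAt W (fderiv ℝ W x) x := (hW.differentiableAt two_ne_zero).hasFDerivAt
  have hu1 : HasFDerivAt u (fderiv ℝ u x) x := (hu.differentiableAt two_ne_zero).hasFDerivAt
  have key : ∀ v : E → ℝ, ContDiffAt ℝ 2 v x →
      HasFDerivAt (fun y => fderiv ℝ v y e)
        ((ContinuousLinearMap.apply ℝ ℝ e).comp (fderiv ℝ (fderiv ℝ v) x)) x := by
    intro v hv
    have h1 : DifferentiableAt ℝ (fderiv ℝ v) x :=
      (hv.fderiv_right (m := 1) (by norm_num)).differentiableAt one_ne_zero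
    exact (ContinuousLinearMap.apply ℝ ℝ e).hasFDerivAt.comp x h1.hasFDerivAt
  have hfW := (hf (W x)).comp_hasFDerivAt x hW1
  have hhW := (hh (W x)).comp_hasFDerivAt x hW1
  have hinv := (hasDerivAt_inv hux).comp_hasFDerivAt x hu1
  have tot := ((hfW.mul hhW).mul (key W hW)).sub (((hfW.pow 2).mul (key u hu)).mul hinv)
  have tot2 : HasFDerivAt
    (fun y => f (W y) * h (W y) * fderiv ℝ W y e - f (W y) ^ 2 * fderiv ℝ u y e / u y) _ x :=
    tot.congr_of_eventuallyEq (Filter.Eventually.of_forall fun y => by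
      simp [div_eq_mul_inv])
  rw [tot2.fderiv]
  simp
  field_simp
  ring

lemma contDiffAt_X {E : Type*} [NormedAddCommGroup E] [NormedSpace ℝ E] (f h : ℝ → ℝ)
    (hf : ContDiff ℝ 1 f) (hh : ContDiff ℝ 1 h)
    (W u : E → ℝ) (x e : E) (hW : ContDiffAt ℝ 2 W x) (hu : ContDiffAt ℝ 2 u x) (hux : u x ≠ 0) :
    ContDiffAt ℝ 1
      (fun y => f (W y) * h (W y) * fderiv ℝ W y e - f (W y) ^ 2 * fderiv ℝ u y e / u y) x := by
  have key : ∀ v : E → ℝ, ContDiffAt ℝ 2 v x → ContDiffAt ℝ 1 (fun y => fderiv ℝ v y e) x := by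
    intro v hv
    exact (hv.fderiv_right (m := 1) (by norm_num)).clm_apply contDiffAt_const
  have hW1 : ContDiffAt ℝ 1 W x := hW.of_le (by norm_num)
  have hu1 : ContDiffAt ℝ 1 u x := hu.of_le (by norm_num)
  have h1 : ContDiffAt ℝ 1 (fun y => f (W y)) x := hf.contDiffAt.comp x hW1
  have h2 : ContDiffAt ℝ 1 (fun y => h (W y)) x := hh.contDiffAt.comp x hW1
  exact ((h1.mul h2).mul (key W hW)).sub (((h1.pow 2).mul (key u hu)).div hu1 hux)

lemma integral_fderiv_zero {N : ℕ} (g : Euc N → ℝ) (hg : ContDiff ℝ 1 g)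
    (hc : HasCompactSupport g) (e : Euc N) :
    Integrable (fun x => fderiv ℝ g x e) ∧ ∫ x, fderiv ℝ g x e = 0 := by
  have h1 : Integrable (fun x => fderiv ℝ g x e) := by
    apply Continuous.integrable_of_hasCompactSupport
    · exact (hg.continuous_fderiv one_ne_zero).clm_apply continuous_const
    · exact hc.fderiv_apply ℝ e
  refine ⟨h1, ?_⟩
  have := integral_mul_fderiv_eq_neg_fderiv_mul_of_integrable (μ := (volume : Measure (Euc N)))
    (f := fun _ => (1:ℝ)) (g := g) (v := e) (by simp) (by simpa using h1)
    (by simpa using hg.continuous.integrable_of_hasCompactSupport hc)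
    (by intro x _; exact differentiableAt_const _)
    (by intro x _; exact hg.differentiable one_ne_zero x)
  simpa using this

lemma lap_eq {N : ℕ} (u : Euc N → ℝ) (x : Euc N) :
    lap N u x = ∑ i : Fin N, fderiv ℝ (fderiv ℝ u) x (EuclideanSpace.single i 1)
      (EuclideanSpace.single i 1) := by
  simp [lap, iteratedFDeriv_two_apply]

/-- The divergence inequality, for a fixed cutoff level. -/
lemma core_div {N : ℕ} (D : Set (Euc N)) (hD : IsOpen D) (W u : Euc N → ℝ)
    (hW : ContDiffOn ℝ 2 W D) (hu : ContDiffOn ℝ 2 u D) (hu0 : ∀ x ∈ D, 0 < u x)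
    (ε : ℝ) (hK : IsCompact (D ∩ {x | ε ≤ W x}))
    (f h h' : ℝ → ℝ)
    (hf : ∀ s, HasDerivAt f (h s) s) (hh : ∀ s, HasDerivAt h (h' s) s)
    (hh1 : ContDiff ℝ 1 h) (hf1 : ContDiff ℝ 1 f)
    (hh0 : ∀ s, 0 ≤ h' s) (hf0 : ∀ s, 0 ≤ f s) (hfε : ∀ s, s ≤ ε → f s = 0) :
    ∃ Y : Euc N → ℝ, Integrable Y ∧ ∫ x, Y x = 0 ∧ (∀ x ∉ D, Y x = 0) ∧
      ∀ x ∈ D, f (W x) * h (W x) * lap N W x - f (W x) ^ 2 * lap N u x / u x ≤ Y x := by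
  classical
  let X0 : Euc N → Euc N → ℝ := fun e y =>
    f (W y) * h (W y) * fderiv ℝ W y e - f (W y) ^ 2 * fderiv ℝ u y e / u y
  let X : Euc N → Euc N → ℝ := fun e => D.indicator (X0 e)
  have hXD : ∀ e, ∀ x ∈ D, X e =ᶠ[nhds x] X0 e := by
    intro e x hx
    filter_upwards [hD.mem_nhds hx] with y hy
    exact Set.indicator_of_mem hy _
  have hXK : ∀ e, ∀ x ∉ D ∩ {x | ε ≤ W x}, X e x = 0 := by
    intro e x hx
    by_cases hxD : x ∈ D
    · have : W x ≤ ε := by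
        by_contra hc
        exact hx ⟨hxD, (not_le.1 hc).le⟩
      simp only [X, Set.indicator_of_mem hxD, X0, hfε _ this]
      simp
    · exact Set.indicator_of_notMem hxD _
  have hXn : ∀ e, ∀ x ∉ D, X e =ᶠ[nhds x] fun _ => 0 := by
    intro e x hx
    filter_upwards [hK.isClosed.isOpen_compl.mem_nhds (fun hc => hx hc.1)] with y hy
    exact hXK e y hy
  have hXc : ∀ e, HasCompactSupport (X e) := fun e =>
    HasCompactSupport.intro hK (hXK e)
  have hWx : ∀ x ∈ D, ContDiffAt ℝ 2 W x := fun x hx => hW.contDiffAt (hD.mem_nhds hx)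
  have hux : ∀ x ∈ D, ContDiffAt ℝ 2 u x := fun x hx => hu.contDiffAt (hD.mem_nhds hx)
  have hXs : ∀ e, ContDiff ℝ 1 (X e) := by
    intro e
    rw [contDiff_iff_contDiffAt]
    intro x
    by_cases hx : x ∈ D
    · exact (contDiffAt_X f h hf1 hh1 W u x e (hWx x hx) (hux x hx)
        (hu0 x hx).ne').congr_of_eventuallyEq (hXD e x hx)
    · exact contDiffAt_const.congr_of_eventuallyEq (hXn e x hx)
  have hI := fun e => integral_fderiv_zero (X e) (hXs e) (hXc e) e
  refine ⟨fun x => ∑ i : Fin N, fderiv ℝ (X (EuclideanSpace.single i 1)) x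
    (EuclideanSpace.single i 1), ?_, ?_, ?_, ?_⟩
  · exact integrable_finsetSum _ fun i _ => (hI _).1
  · rw [integral_finsetSum _ fun i _ => (hI _).1]
    exact Finset.sum_eq_zero fun i _ => (hI _).2
  · intro x hx
    apply Finset.sum_eq_zero
    intro i _
    rw [(hXn _ x hx).fderiv_eq]; simp
  · intro x hx
    rw [lap_eq, lap_eq, Finset.mul_sum, Finset.mul_sum, Finset.sum_div, ← Finset.sum_sub_distrib]
    apply Finset.sum_le_sum
    intro i _
    rw [(hXD _ x hx).fderiv_eq, div_calc f h h' hf hh W u x _ (hWx x hx) (hux x hx) (hu0 x hx).ne']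
    have h1 := sq_nonneg (h (W x) * fderiv ℝ W x (EuclideanSpace.single i 1) -
      f (W x) * fderiv ℝ u x (EuclideanSpace.single i 1) / u x)
    have h2 : 0 ≤ f (W x) * h' (W x) * fderiv ℝ W x (EuclideanSpace.single i 1) ^ 2 :=
      mul_nonneg (mul_nonneg (hf0 _) (hh0 _)) (sq_nonneg _)
    linarith

lemma core {N : ℕ} (D : Set (Euc N)) (hD : IsOpen D) (hDb : Bornology.IsBounded D)
    (hDn : D.Nonempty) (W u V : Euc N → ℝ)
    (hW : ContDiffOn ℝ 2 W D) (hu : ContDiffOn ℝ 2 u D)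
    (hW0 : ∀ x ∈ D, 0 < W x) (hu0 : ∀ x ∈ D, 0 < u x)
    (M : ℝ) (hM : ∀ x ∈ D, W x ≤ M)
    (hK : ∀ ε > 0, IsCompact (D ∩ {x | ε ≤ W x}))
    (v0 v1 : ℝ) (hv0 : 0 < v0) (hV0 : ∀ x ∈ D, v0 ≤ V x) (hV1 : ∀ x ∈ D, V x ≤ v1)
    (m μ : ℝ) (hlW : ∀ x ∈ D, lap N W x = -m * V x * W x)
    (hlu : ∀ x ∈ D, lap N u x ≤ -μ * V x * u x) : μ ≤ m := by
  by_contra hlt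
  push Not at hlt
  obtain ⟨x0, hx0⟩ := hDn
  set c := W x0 / 2 with hc
  have hc0 : 0 < c := half_pos (hW0 x0 hx0)
  have hM0 : 0 < M := (hW0 x0 hx0).trans_le (hM x0 hx0)
  have hv1 : 0 < v1 := hv0.trans_le ((hV0 x0 hx0).trans (hV1 x0 hx0))
  -- the set where W > c
  set B := D ∩ W ⁻¹' Set.Ioi c with hB
  have hBo : IsOpen B := hW.continuousOn.isOpen_inter_preimage hD isOpen_Ioi
  have hBn : B.Nonempty := ⟨x0, hx0, by simp only [Set.mem_preimage, Set.mem_Ioi]; linarith⟩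
  have hBD : B ⊆ D := Set.inter_subset_left
  have hDfin : volume D ≠ ⊤ := hDb.measure_lt_top.ne
  have hBfin : volume B ≠ ⊤ := ((measure_mono hBD).trans_lt hDb.measure_lt_top).ne
  have hBpos : 0 < volume.real B := ENNReal.toReal_pos (hBo.measure_pos _ hBn).ne' hBfin
  set b := volume.real B
  set d := volume.real D
  have hd0 : 0 ≤ d := measureReal_nonneg
  -- choose ε
  set P := v0 * (μ - m) * (c / 2) ^ 2 * b with hP
  have hP0 : 0 < P := by have : 0 < μ - m := by linarith
                         positivity
  set Q := v1 * (2 * |m| * M) * d with hQ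
  have hQ0 : 0 ≤ Q := by positivity
  obtain ⟨ε, hε, hεc, hεP⟩ : ∃ ε : ℝ, 0 < ε ∧ 2 * ε ≤ c / 2 ∧ ε * Q < P := by
    refine ⟨min (c / 4) (P / (Q + 1)), by positivity, ?_, ?_⟩
    · linarith [min_le_left (c / 4) (P / (Q + 1))]
    · have h1 : min (c / 4) (P / (Q + 1)) * Q ≤ P / (Q + 1) * Q := by
        gcongr; exact min_le_right _ _
      have h2 : P / (Q + 1) * Q < P := by
        rw [div_mul_eq_mul_div, div_lt_iff₀ (by positivity)]
        nlinarith
      linarith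
  obtain ⟨f, h, h', hf, hh, hh1, hf1, hh0, hf0, hfε, hfle, hfge, hfh⟩ := exists_cutoff ε hε
  obtain ⟨Y, hYi, hY0, hYn, hYD⟩ := core_div D hD W u hW hu hu0 ε (hK ε hε) f h h' hf hh hh1 hf1
    hh0 hf0 hfε
  have low : ∀ x ∈ D, V x * ((μ - m) * f (W x) ^ 2 - 2 * ε * |m| * f (W x)) ≤ Y x := by
    intro x hx
    refine le_trans ?_ (hYD x hx)
    have hV : 0 < V x := hv0.trans_le (hV0 x hx)
    have h1 : f (W x) ^ 2 * lap N u x / u x ≤ -μ * V x * f (W x) ^ 2 := by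
      rw [div_le_iff₀ (hu0 x hx)]
      have := mul_le_mul_of_nonneg_left (hlu x hx) (sq_nonneg (f (W x)))
      linarith
    rw [hlW x hx]
    have h2 : m * (W x * h (W x) - f (W x)) ≤ |m| * (2 * ε) := by
      refine (le_abs_self _).trans ?_
      rw [abs_mul]
      exact mul_le_mul_of_nonneg_left (hfh _ (hW0 x hx)) (abs_nonneg m)
    have h3 := mul_le_mul_of_nonneg_left h2 (mul_nonneg hV.le (hf0 (W x)))
    linarith
  have low2 : ∀ x, B.indicator (fun _ => v0 * (μ - m) * (c / 2) ^ 2) x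
      - D.indicator (fun _ => ε * (v1 * (2 * |m| * M))) x ≤ Y x := by
    intro x
    by_cases hx : x ∈ D
    · refine le_trans ?_ (low x hx)
      have hV : 0 < V x := hv0.trans_le (hV0 x hx)
      rw [Set.indicator_of_mem hx]
      have e1 : V x * (2 * ε * |m| * f (W x)) ≤ ε * (v1 * (2 * |m| * M)) := by
        have : f (W x) ≤ M := (hfle _ (hW0 x hx)).trans (hM x hx)
        have := hf0 (W x)
        calc V x * (2 * ε * |m| * f (W x)) ≤ v1 * (2 * ε * |m| * M) := by
              gcongr
              exact hV1 x hx
          _ = _ := by ring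
      have e2 : B.indicator (fun _ => v0 * (μ - m) * (c / 2) ^ 2) x
          ≤ V x * ((μ - m) * f (W x) ^ 2) := by
        have hμ : 0 ≤ μ - m := by linarith
        by_cases hxB : x ∈ B
        · rw [Set.indicator_of_mem hxB]
          have h1 : c < W x := hxB.2
          have h2 : c / 2 ≤ f (W x) := by linarith [hfge (W x)]
          calc v0 * (μ - m) * (c / 2) ^ 2 = v0 * ((μ - m) * (c / 2) ^ 2) := by ring
            _ ≤ _ := by
              gcongr
              exact hV0 x hx
        · rw [Set.indicator_of_notMem hxB]
          positivity
      linarith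
    · rw [hYn x hx, Set.indicator_of_notMem hx, Set.indicator_of_notMem (fun hc => hx (hBD hc))]
      simp
  have i1 : Integrable (B.indicator (fun _ : Euc N => v0 * (μ - m) * (c / 2) ^ 2)) :=
    (integrable_indicator_iff hBo.measurableSet).2 (integrableOn_const hBfin)
  have i2 : Integrable (D.indicator (fun _ : Euc N => ε * (v1 * (2 * |m| * M)))) :=
    (integrable_indicator_iff hD.measurableSet).2 (integrableOn_const hDfin)
  have := integral_mono (i1.sub i2) hYi low2
  simp only [Pi.sub_apply] at this
  rw [integral_sub i1 i2, hY0, integral_indicator hBo.measurableSet,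
    integral_indicator hD.measurableSet, setIntegral_const, setIntegral_const] at this
  simp only [smul_eq_mul] at this
  change b * _ - d * _ ≤ 0 at this
  nlinarith

lemma hess_apply {E : Type*} [NormedAddCommGroup E] [NormedSpace ℝ E] (v : E → ℝ) (x e : E)
    (hv : ContDiffAt ℝ 2 v x) :
    DifferentiableAt ℝ (fun y => fderiv ℝ v y e) x ∧
    fderiv ℝ (fun y => fderiv ℝ v y e) x e = fderiv ℝ (fderiv ℝ v) x e e := by
  have h1 : DifferentiableAt ℝ (fderiv ℝ v) x :=
    (hv.fderiv_right (m := 1) (by norm_num)).differentiableAt one_ne_zero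
  have h2 := (ContinuousLinearMap.apply ℝ ℝ e).hasFDerivAt.comp x h1.hasFDerivAt
  have h3 : HasFDerivAt (fun y => fderiv ℝ v y e)
    ((ContinuousLinearMap.apply ℝ ℝ e).comp (fderiv ℝ (fderiv ℝ v) x)) x := h2
  exact ⟨h3.differentiableAt, by rw [h3.fderiv]; rfl⟩

lemma hess_mul {E : Type*} [NormedAddCommGroup E] [NormedSpace ℝ E] (a b : E → ℝ) (x e : E)
    (ha : ContDiffAt ℝ 2 a x) (hb : ContDiffAt ℝ 2 b x) :
    fderiv ℝ (fderiv ℝ (fun y => a y * b y)) x e e =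
      a x * fderiv ℝ (fderiv ℝ b) x e e + 2 * (fderiv ℝ a x e * fderiv ℝ b x e)
      + b x * fderiv ℝ (fderiv ℝ a) x e e := by
  rw [← (hess_apply _ x e (ha.mul hb)).2, ← (hess_apply a x e ha).2, ← (hess_apply b x e hb).2]
  have hev : (fun y => fderiv ℝ (fun y => a y * b y) y e) =ᶠ[nhds x]
      fun y => a y * fderiv ℝ b y e + b y * fderiv ℝ a y e := by
    filter_upwards [ha.eventually (by simp), hb.eventually (by simp)] with y hay hby
    rw [fderiv_fun_mul (hay.differentiableAt two_ne_zero) (hby.differentiableAt two_ne_zero)]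
    simp
  rw [hev.fderiv_eq]
  have ha1 := ha.differentiableAt two_ne_zero
  have hb1 := hb.differentiableAt two_ne_zero
  have ha2 := (hess_apply a x e ha).1
  have hb2 := (hess_apply b x e hb).1
  rw [fderiv_fun_add (ha1.fun_mul hb2) (hb1.fun_mul ha2), fderiv_fun_mul ha1 hb2, fderiv_fun_mul hb1 ha2]
  simp
  ring

lemma radial_fderiv {N : ℕ} (G G1 : ℝ → ℝ) (hG : ∀ s > 0, HasDerivAt G (G1 s) s)
    (y e : Euc N) (hy : y ≠ 0) :
    fderiv ℝ (fun y : Euc N => G (‖y‖ ^ 2)) y e = G1 (‖y‖ ^ 2) * (2 * inner ℝ y e) := by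
  have h1 : HasFDerivAt (fun y : Euc N => ‖y‖ ^ 2) (2 • innerSL ℝ y) y :=
    (hasStrictFDerivAt_norm_sq y).hasFDerivAt
  have h2 : HasFDerivAt (fun y : Euc N => G (‖y‖ ^ 2)) _ y :=
    (hG _ (by positivity)).comp_hasFDerivAt y h1
  rw [h2.fderiv]
  simp

lemma radial_hess {N : ℕ} (G G1 G2 : ℝ → ℝ) (hG : ∀ s > 0, HasDerivAt G (G1 s) s)
    (hG1 : ∀ s > 0, HasDerivAt G1 (G2 s) s) (x e : Euc N) (hx : x ≠ 0)
    (hR : ContDiffAt ℝ 2 (fun y : Euc N => G (‖y‖ ^ 2)) x) :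
    fderiv ℝ (fderiv ℝ (fun y : Euc N => G (‖y‖ ^ 2))) x e e
      = 4 * G2 (‖x‖ ^ 2) * (inner ℝ x e) ^ 2 + 2 * G1 (‖x‖ ^ 2) * inner ℝ e e := by
  rw [← (hess_apply _ x e hR).2]
  have hev : (fun y => fderiv ℝ (fun y : Euc N => G (‖y‖ ^ 2)) y e) =ᶠ[nhds x]
      fun y => G1 (‖y‖ ^ 2) * (2 * inner ℝ y e) := by
    filter_upwards [isOpen_ne.mem_nhds hx] with y hy
    exact radial_fderiv G G1 hG y e hy
  rw [hev.fderiv_eq]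
  have h1 : HasFDerivAt (fun y : Euc N => ‖y‖ ^ 2) (2 • innerSL ℝ x) x :=
    (hasStrictFDerivAt_norm_sq x).hasFDerivAt
  have h2 : HasFDerivAt (fun y : Euc N => G1 (‖y‖ ^ 2)) _ x :=
    (hG1 _ (by positivity)).comp_hasFDerivAt x h1
  have h3 : HasFDerivAt (fun y : Euc N => inner ℝ y e) (innerSL ℝ e) x := by
    have := (innerSL ℝ e).hasFDerivAt (x := x)
    refine this.congr_of_eventuallyEq (Filter.Eventually.of_forall fun y => ?_)
    simp [real_inner_comm]
  have h4 := h2.mul (h3.const_mul 2)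
  have h5 : HasFDerivAt (fun y : Euc N => G1 (‖y‖ ^ 2) * (2 * inner ℝ y e)) _ x := h4
  rw [h5.fderiv]
  simp
  ring

/-- Laplacian of a radial function times a zero-homogeneous function. -/
lemma lap_radial_mul {N : ℕ} (G G1 G2 : ℝ → ℝ) (hG : ∀ s > 0, HasDerivAt G (G1 s) s)
    (hG1 : ∀ s > 0, HasDerivAt G1 (G2 s) s) (x : Euc N) (hx : x ≠ 0)
    (hR : ContDiffAt ℝ 2 (fun y : Euc N => G (‖y‖ ^ 2)) x)
    (Φ : Euc N → ℝ) (hΦ : ContDiffAt ℝ 2 Φ x) (hhom : fderiv ℝ Φ x x = 0) :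
    lap N (fun y => G (‖y‖ ^ 2) * Φ y) x = G (‖x‖ ^ 2) * lap N Φ x
      + Φ x * (4 * ‖x‖ ^ 2 * G2 (‖x‖ ^ 2) + 2 * N * G1 (‖x‖ ^ 2)) := by
  rw [lap_eq, lap_eq]
  have e1 : ∀ i : Fin N, inner ℝ x (EuclideanSpace.single i (1:ℝ)) = x i := by
    intro i; simp [EuclideanSpace.inner_single_right]
  have : ∀ i : Fin N, fderiv ℝ (fderiv ℝ (fun y => G (‖y‖ ^ 2) * Φ y)) x
      (EuclideanSpace.single i 1) (EuclideanSpace.single i 1)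
      = G (‖x‖ ^ 2) * fderiv ℝ (fderiv ℝ Φ) x (EuclideanSpace.single i 1)
          (EuclideanSpace.single i 1)
        + 4 * G1 (‖x‖ ^ 2) * (x i * fderiv ℝ Φ x (EuclideanSpace.single i 1))
        + 4 * Φ x * G2 (‖x‖ ^ 2) * (x i) ^ 2 + 2 * Φ x * G1 (‖x‖ ^ 2) := by
    intro i
    rw [hess_mul _ _ x _ hR hΦ, radial_fderiv G G1 hG x _ hx,
      radial_hess G G1 G2 hG hG1 x _ hx hR, e1]
    simp
    ring
  simp_rw [this]
  have e2 : ∑ i : Fin N, x i * fderiv ℝ Φ x (EuclideanSpace.single i 1) = 0 := by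
    have hx' : x = ∑ i : Fin N, x i • (EuclideanSpace.single i (1:ℝ) : Euc N) := by
      have := (EuclideanSpace.basisFun (Fin N) ℝ).sum_repr x
      simpa using this.symm
    rw [← hhom]
    conv_rhs => arg 2; rw [hx']
    rw [map_sum]
    simp
  have e3 : ∑ i : Fin N, (x i) ^ 2 = ‖x‖ ^ 2 := (EuclideanSpace.real_norm_sq_eq x).symm
  rw [Finset.sum_add_distrib, Finset.sum_add_distrib, Finset.sum_add_distrib, ← Finset.mul_sum,
    ← Finset.mul_sum, ← Finset.mul_sum, e2, e3]
  simp
  ring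

/-- The radial profile. -/
def GG (a κ l s : ℝ) : ℝ := Real.exp (-a * (Real.log s / 2)) * Real.sin (κ * (Real.log s / 2 - l))
def GG1 (a κ l s : ℝ) : ℝ := Real.exp (-a * (Real.log s / 2)) *
  (κ * Real.cos (κ * (Real.log s / 2 - l)) - a * Real.sin (κ * (Real.log s / 2 - l))) / (2 * s)
def GG2 (a κ l s : ℝ) : ℝ := Real.exp (-a * (Real.log s / 2)) *
  ((a ^ 2 - κ ^ 2) * Real.sin (κ * (Real.log s / 2 - l))
    - 2 * a * κ * Real.cos (κ * (Real.log s / 2 - l))) / (4 * s ^ 2)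
  - Real.exp (-a * (Real.log s / 2)) *
  (κ * Real.cos (κ * (Real.log s / 2 - l)) - a * Real.sin (κ * (Real.log s / 2 - l))) / (2 * s ^ 2)

lemma GG_deriv (a κ l s : ℝ) (hs : 0 < s) : HasDerivAt (GG a κ l) (GG1 a κ l s) s := by
  have hL : HasDerivAt (fun s => Real.log s / 2) (s⁻¹ / 2) s :=
    (Real.hasDerivAt_log hs.ne').div_const 2
  have hE := (hL.const_mul (-a)).exp
  have hS := ((hL.sub_const l).const_mul κ).sin
  have := hE.mul hS
  refine (this.congr_deriv ?_ : _)
  unfold GG1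
  field_simp
  ring

lemma GG1_deriv (a κ l s : ℝ) (hs : 0 < s) : HasDerivAt (GG1 a κ l) (GG2 a κ l s) s := by
  have hL : HasDerivAt (fun s => Real.log s / 2) (s⁻¹ / 2) s :=
    (Real.hasDerivAt_log hs.ne').div_const 2
  have hE := (hL.const_mul (-a)).exp
  have hS := ((hL.sub_const l).const_mul κ).sin
  have hC := ((hL.sub_const l).const_mul κ).cos
  have := (hE.mul ((hC.const_mul κ).sub (hS.const_mul a))).div
    ((hasDerivAt_id s).const_mul 2) (by simp; exact hs.ne')
  refine (this.congr_deriv ?_ : _)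
  unfold GG2
  simp
  field_simp
  ring

lemma GG_ode (N : ℕ) (κ l s : ℝ) (hs : 0 < s) :
    4 * s * GG2 (((N : ℝ) - 2) / 2) κ l s + 2 * N * GG1 (((N : ℝ) - 2) / 2) κ l s
      = -(κ ^ 2 + (((N : ℝ) - 2) / 2) ^ 2) * s⁻¹ * GG (((N : ℝ) - 2) / 2) κ l s := by
  unfold GG GG1 GG2
  field_simp
  ring

lemma GG_contDiffAt {N : ℕ} (a κ l : ℝ) (x : Euc N) (hx : x ≠ 0) :
    ContDiffAt ℝ 2 (fun y : Euc N => GG a κ l (‖y‖ ^ 2)) x := by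
  have h1 : ContDiffAt ℝ 2 (fun y : Euc N => ‖y‖ ^ 2) x := (contDiff_norm_sq ℝ).contDiffAt
  have h2 : ContDiffAt ℝ 2 (fun y : Euc N => Real.log (‖y‖ ^ 2) / 2) x :=
    (h1.log (by positivity)).div_const 2
  exact (contDiffAt_const.mul h2).exp.mul
    (Real.contDiff_sin.contDiffAt.comp x (contDiffAt_const.mul (h2.sub contDiffAt_const)))

lemma GG_norm (a κ l r : ℝ) :
    GG a κ l (r ^ 2) = Real.exp (-a * Real.log r) * Real.sin (κ * (Real.log r - l)) := by
  have : Real.log (r ^ 2) / 2 = Real.log r := by rw [Real.log_pow]; push_cast; ring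
  simp only [GG, this]

lemma hom_fderiv {N : ℕ} (φ : Euc N → ℝ) (x : Euc N)
    (hd : DifferentiableAt ℝ (fun y => φ (‖y‖⁻¹ • y)) x) :
    fderiv ℝ (fun y => φ (‖y‖⁻¹ • y)) x x = 0 := by
  have h1 : HasDerivAt (fun t : ℝ => x + t • x) x 0 := by
    simpa using ((hasDerivAt_id (0:ℝ)).smul_const x).const_add x
  have hd' : HasFDerivAt (fun y => φ (‖y‖⁻¹ • y)) (fderiv ℝ (fun y => φ (‖y‖⁻¹ • y)) x)
    (x + (0:ℝ) • x) := by simpa using hd.hasFDerivAt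
  have h2 := hd'.comp_hasDerivAt (0:ℝ) h1
  have h3 : ((fun y => φ (‖y‖⁻¹ • y)) ∘ fun t : ℝ => x + t • x) =ᶠ[nhds 0]
      fun _ => φ (‖x‖⁻¹ • x) := by
    filter_upwards [Ioi_mem_nhds (show (-1:ℝ) < 0 by norm_num)] with t ht
    have ht' : 0 < 1 + t := by have : -1 < t := ht
                               linarith
    have : x + t • x = (1 + t) • x := by rw [add_smul, one_smul]
    simp only [Function.comp, this]
    rw [norm_smul, Real.norm_of_nonneg ht'.le, smul_smul]
    congr 2
    field_simp
  have h4 := (hasDerivAt_const (0:ℝ) (φ (‖x‖⁻¹ • x))).congr_of_eventuallyEq h3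
  exact h2.unique h4

/-- Lemma 2.1: if `-Δ - μ|x|⁻²` admits a positive `C²` supersolution on
`C_Ω^ρ`, then `μ ≤ C_{H,Ω}`. -/
theorem mu_le_hardy_of_positive_supersolution
    (N : ℕ) (hN : 2 ≤ N) (Ω : Set (Euc N)) (hΩ : IsConeDomain N Ω)
    (lam1 : ℝ) (φ : Euc N → ℝ) (hphi : DirichletEigenpair N Ω lam1 φ)
    (ρ μ : ℝ) (hρ : 0 < ρ)
    (h : ∃ u : Euc N → ℝ, ContDiffOn ℝ 2 u (coneGT N ρ Ω) ∧
      (∀ x ∈ coneGT N ρ Ω, 0 < u x) ∧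
      (∀ x ∈ coneGT N ρ Ω, 0 ≤ -lap N u x - μ * ‖x‖ ^ (-(2:ℝ)) * u x)) :
    μ ≤ CHconst N lam1 := by
  obtain ⟨u, hu, hu0, hsup⟩ := h
  by_contra hlt
  push Not at hlt
  set a : ℝ := ((N : ℝ) - 2) / 2 with ha
  have ha0 : 0 ≤ a := by
    have : (2:ℝ) ≤ N := by exact_mod_cast hN
    rw [ha]; linarith
  set κ : ℝ := Real.sqrt ((μ - CHconst N lam1) / 2) with hκ
  have hκ0 : 0 < κ := Real.sqrt_pos.2 (by linarith)
  have hκ2 : κ ^ 2 = (μ - CHconst N lam1) / 2 := Real.sq_sqrt (by linarith)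
  have hm : κ ^ 2 + a ^ 2 + lam1 < μ := by
    have : CHconst N lam1 = lam1 + a ^ 2 := rfl
    linarith
  set l := Real.log ρ with hl
  set ρ' := ρ * Real.exp (π / κ) with hρ'
  have hρ'0 : 0 < ρ' := by positivity
  have hlρ' : Real.log ρ' = l + π / κ := by
    rw [hρ', Real.log_mul hρ.ne' (Real.exp_ne_zero _), Real.log_exp]
  set Φ : Euc N → ℝ := fun y => φ (‖y‖⁻¹ • y) with hΦ
  set W : Euc N → ℝ := fun y => GG a κ l (‖y‖ ^ 2) * Φ y with hWdef
  set D : Set (Euc N) := {x | ρ < ‖x‖ ∧ ‖x‖ < ρ' ∧ ‖x‖⁻¹ • x ∈ Ω} with hDdef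
  obtain ⟨hΩs, ⟨hΩn, _⟩, hΩo⟩ := hΩ
  have hne : ∀ x ∈ D, x ≠ 0 := by
    intro x hx hx0
    have := hx.1
    rw [hx0, norm_zero] at this
    linarith
  have hDcone : ∀ x ∈ D, x ∈ cone N Ω := fun x hx => ⟨hne x hx, hx.2.2⟩
  have hDGT : D ⊆ coneGT N ρ Ω := fun x hx => ⟨hx.1, hx.2.2⟩
  have hnorm : ContinuousOn (fun x : Euc N => ‖x‖⁻¹ • x) {x | x ≠ 0} :=
    (continuous_norm.continuousOn.inv₀ (fun x hx => norm_ne_zero_iff.2 hx)).smul continuousOn_id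
  obtain ⟨U, hUo, hU⟩ := isOpen_induced_iff.1 hΩo
  have hUΩ : ∀ x : Euc N, x ≠ 0 → (‖x‖⁻¹ • x ∈ Ω ↔ ‖x‖⁻¹ • x ∈ U) := by
    intro x hx
    have hs : ‖x‖⁻¹ • x ∈ Metric.sphere (0 : Euc N) 1 := by
      rw [mem_sphere_zero_iff_norm, norm_smul, norm_inv, norm_norm,
        inv_mul_cancel₀ (norm_ne_zero_iff.2 hx)]
    have := Set.ext_iff.1 hU ⟨_, hs⟩
    exact this.symm
  have hconeo : IsOpen (cone N Ω) := by
    have : cone N Ω = {x | x ≠ 0} ∩ (fun x : Euc N => ‖x‖⁻¹ • x) ⁻¹' U := by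
      ext x
      constructor
      · rintro ⟨h1, h2⟩; exact ⟨h1, (hUΩ x h1).1 h2⟩
      · rintro ⟨h1, h2⟩; exact ⟨h1, (hUΩ x h1).2 h2⟩
    rw [this]
    exact hnorm.isOpen_inter_preimage isOpen_ne hUo
  have hDo : IsOpen D := by
    have : D = cone N Ω ∩ {x | ρ < ‖x‖} ∩ {x | ‖x‖ < ρ'} := by
      ext x
      constructor
      · intro hx; exact ⟨⟨hDcone x hx, hx.1⟩, hx.2.1⟩
      · rintro ⟨⟨h1, h2⟩, h3⟩; exact ⟨h2, h3, h1.2⟩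
    rw [this]
    exact (hconeo.inter (isOpen_lt continuous_const continuous_norm)).inter
      (isOpen_lt continuous_norm continuous_const)
  have hΦc : ∀ x ∈ D, ContDiffAt ℝ 2 Φ x := fun x hx =>
    hphi.smoothExt.contDiffAt (hconeo.mem_nhds (hDcone x hx))
  have hsin : ∀ r, ρ < r → r < ρ' → 0 < Real.sin (κ * (Real.log r - l)) := by
    intro r h1 h2
    have h3 : l < Real.log r := Real.log_lt_log hρ h1
    have h4 : Real.log r < l + π / κ := hlρ' ▸ Real.log_lt_log (hρ.trans h1) h2
    apply Real.sin_pos_of_pos_of_lt_pi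
    · exact mul_pos hκ0 (by linarith)
    · have : κ * (Real.log r - l) < κ * (π / κ) := by gcongr; linarith
      rwa [mul_div_cancel₀ _ hκ0.ne'] at this
  have hmain : μ ≤ κ ^ 2 + a ^ 2 + lam1 := by
    refine core D hDo ?_ ?_ W u (fun x => ‖x‖ ^ (-(2:ℝ))) ?_ (hu.mono hDGT) ?_
      (fun x hx => hu0 x (hDGT hx)) (Real.exp (-a * l)) ?_ ?_ (ρ' ^ (-(2:ℝ))) (ρ ^ (-(2:ℝ)))
      (by positivity) ?_ ?_ _ μ ?_ ?_
    · refine Metric.isBounded_closedBall.subset (s := D) (t := Metric.closedBall 0 ρ') ?_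
      intro x hx
      rw [mem_closedBall_zero_iff]
      exact hx.2.1.le
    · obtain ⟨ω, hω⟩ := hΩn
      have hω1 : ‖ω‖ = 1 := mem_sphere_zero_iff_norm.1 (hΩs hω)
      have hlt' : ρ < ρ' := by
        have : 1 < Real.exp (π / κ) := Real.one_lt_exp_iff.2 (by positivity)
        rw [hρ']; nlinarith
      have hr : 0 < (ρ + ρ') / 2 := by positivity
      have hn : ‖((ρ + ρ') / 2) • ω‖ = (ρ + ρ') / 2 := by
        rw [norm_smul, hω1, mul_one, Real.norm_of_nonneg hr.le]
      refine ⟨((ρ + ρ') / 2) • ω, ?_, ?_, ?_⟩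
      · rw [hn]; linarith
      · rw [hn]; linarith
      · rw [hn, smul_smul, inv_mul_cancel₀ hr.ne', one_smul]; exact hω
    · intro x hx
      exact ((GG_contDiffAt a κ l x (hne x hx)).mul (hΦc x hx)).contDiffWithinAt
    · intro x hx
      rw [hWdef]
      simp only [GG_norm]
      exact mul_pos (mul_pos (Real.exp_pos _) (hsin _ hx.1 hx.2.1)) (hphi.pos _ hx.2.2)
    · intro x hx
      rw [hWdef]
      simp only [GG_norm]
      have h1 : Real.exp (-a * Real.log ‖x‖) ≤ Real.exp (-a * l) := by
        have : l ≤ Real.log ‖x‖ := Real.log_le_log hρ hx.1.le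
        apply Real.exp_le_exp.2
        nlinarith
      have h2 : Real.sin (κ * (Real.log ‖x‖ - l)) ≤ 1 := Real.sin_le_one _
      have h3 : Φ x ≤ 1 := hphi.le_one _ (subset_closure hx.2.2)
      have h4 : 0 < Φ x := hphi.pos _ hx.2.2
      have h5 := hsin _ hx.1 hx.2.1
      calc _ ≤ Real.exp (-a * l) * 1 * 1 := by gcongr
        _ = _ := by ring
    · intro ε hε
      set T : Set (Euc N) := {x | ρ ≤ ‖x‖} ∩ (fun x : Euc N => ‖x‖⁻¹ • x) ⁻¹' (closure Ω) with hT
      have hT0 : ∀ x : Euc N, ρ ≤ ‖x‖ → x ≠ 0 := by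
        intro x hx hx0
        rw [hx0, norm_zero] at hx
        linarith
      have hTc : IsClosed T :=
        (hnorm.mono hT0).preimage_isClosed_of_isClosed
          (isClosed_le continuous_const continuous_norm) isClosed_closure
      have hWT : ContinuousOn W T := by
        apply ContinuousOn.mul
        · intro x hx
          exact (GG_contDiffAt a κ l x (hT0 x hx.1)).continuousAt.continuousWithinAt
        · exact hphi.contOn.comp (hnorm.mono fun x hx => hT0 x hx.1) (fun x hx => hx.2)
      have hcl : IsClosed (T ∩ W ⁻¹' Set.Ici ε) :=
        hWT.preimage_isClosed_of_isClosed hTc isClosed_Ici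
      have heq : D ∩ {x | ε ≤ W x} = Metric.closedBall 0 ρ' ∩ (T ∩ W ⁻¹' Set.Ici ε) := by
        ext x
        constructor
        · rintro ⟨hx, hxW⟩
          exact ⟨mem_closedBall_zero_iff.2 hx.2.1.le, ⟨hx.1.le, subset_closure hx.2.2⟩, hxW⟩
        · rintro ⟨h1, ⟨h2, h3⟩, h4⟩
          have h1' : ‖x‖ ≤ ρ' := mem_closedBall_zero_iff.1 h1
          have h2' : ρ ≤ ‖x‖ := h2
          have hWne : W x ≠ 0 := (hε.trans_le h4).ne'
          have hWx : W x = Real.exp (-a * Real.log ‖x‖) * Real.sin (κ * (Real.log ‖x‖ - l)) * Φ x := by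
            rw [hWdef]; simp only [GG_norm]
          refine ⟨⟨lt_of_le_of_ne h2' ?_, lt_of_le_of_ne h1' ?_, ?_⟩, h4⟩
          · intro he
            apply hWne
            rw [hWx, ← he]
            simp [← hl]
          · intro he
            apply hWne
            rw [hWx, he, hlρ']
            have : κ * (l + π / κ - l) = π := by field_simp; ring
            rw [this]; simp
          · by_contra hc
            apply hWne
            have : Φ x = 0 := hphi.bdryZero _ ⟨h3, hc⟩
            rw [hWx, this, mul_zero]
      rw [heq]
      exact (isCompact_closedBall 0 ρ').inter_right hcl
    · intro x hx
      exact Real.rpow_le_rpow_of_nonpos (hρ.trans hx.1) hx.2.1.le (by norm_num)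
    · intro x hx
      exact Real.rpow_le_rpow_of_nonpos hρ hx.1.le (by norm_num)
    · intro x hx
      have hx0 := hne x hx
      have hxn : 0 < ‖x‖ := norm_pos_iff.2 hx0
      have hpow : ‖x‖ ^ (-(2:ℝ)) = (‖x‖ ^ 2)⁻¹ := by
        rw [Real.rpow_neg hxn.le, Real.rpow_two]
      have hlap := lap_radial_mul (GG a κ l) (GG1 a κ l) (GG2 a κ l)
        (fun s hs => GG_deriv a κ l s hs) (fun s hs => GG1_deriv a κ l s hs) x hx0
        (GG_contDiffAt a κ l x hx0) Φ (hΦc x hx)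
        (hom_fderiv φ x ((hΦc x hx).differentiableAt two_ne_zero))
      have hode := GG_ode N κ l (‖x‖ ^ 2) (by positivity)
      rw [← ha] at hode
      have heig := hphi.eigen x (hDcone x hx)
      have heig' : lap N Φ x = -lam1 * ‖x‖ ^ (-(2:ℝ)) * Φ x := heig
      rw [hlap, hode, heig', hpow]
      ring
    · intro x hx
      have := hsup x (hDGT hx)
      linarith
  linarith
end
end

section
/- Let ρ > 0 and 0 ≤ α < N. If f : C_Ω^ρ → ℝ is measurable, locally integrable on C_Ω^ρ, and f(y) > 0 for all y ∈ C_Ω^ρ, then there exists a constant C > 0 such that ∫_{C_Ω^ρ} f(y)|x−y|^{−α} dy ≥ C·|x|^{−α} for all x ∈ C_Ω^{2ρ} (the left-hand side being interpreted in [0,∞]). -/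
open MeasureTheory Real Set
open scoped ENNReal NNReal

noncomputable section

theorem isOpen_coneGT_aux (N : ℕ) (ρ : ℝ) (hρ : 0 < ρ) (Ω : Set (Euc N))
    (hΩ : IsConeDomain N Ω) : IsOpen (coneGT N ρ Ω) := by
  obtain ⟨U, hU, hUΩ⟩ := isOpen_induced_iff.1 hΩ.2.2
  have h1 : IsOpen {x : Euc N | ρ < ‖x‖} := isOpen_lt continuous_const continuous_norm
  have h2 : ContinuousOn (fun x : Euc N => ‖x‖⁻¹ • x) {x : Euc N | ρ < ‖x‖} := by
    refine ContinuousOn.fun_smul ?_ continuousOn_id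
    apply ContinuousOn.inv₀ continuous_norm.continuousOn
    intro x hx
    exact (hρ.trans hx).ne'
  have h3 := h2.isOpen_inter_preimage h1 hU
  convert h3 using 1
  ext x
  simp only [coneGT, mem_ofPred_eq, mem_inter_iff, mem_preimage]
  refine and_congr_right fun hx => ?_
  have hx0 : ‖x‖ ≠ 0 := (hρ.trans hx).ne'
  have hs : ‖x‖⁻¹ • x ∈ Metric.sphere (0 : Euc N) 1 := by
    simp [norm_smul, hx0]
  have := Set.ext_iff.1 hUΩ ⟨_, hs⟩
  simp only [mem_preimage, mem_ofPred_eq] at this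
  exact this.symm

/-- Lemma 2.2(i): a positive locally integrable `f` on `C_Ω^ρ` satisfies
`(|x|^{-α} * f)(x) ≥ C|x|^{-α}` on `C_Ω^{2ρ}`. -/
theorem conv_lower_bound_of_pos
    (N : ℕ) (hN : 2 ≤ N) (Ω : Set (Euc N)) (hΩ : IsConeDomain N Ω)
    (ρ α : ℝ) (hρ : 0 < ρ) (hα : 0 ≤ α) (hαN : α < N)
    (f : Euc N → ℝ) (hmeas : Measurable f)
    (hloc : LocallyIntegrableOn f (coneGT N ρ Ω))
    (hfpos : ∀ y ∈ coneGT N ρ Ω, 0 < f y) :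
    ∃ C > 0, ∀ x ∈ coneGT N (2 * ρ) Ω,
      ENNReal.ofReal (C * ‖x‖ ^ (-α)) ≤
        ∫⁻ y in coneGT N ρ Ω, ENNReal.ofReal (f y * ‖x - y‖ ^ (-α)) := by
  set A : Set (Euc N) := coneGT N ρ Ω ∩ Metric.ball 0 (2 * ρ) with hA
  have hAo : IsOpen A := (isOpen_coneGT_aux N ρ hρ Ω hΩ).inter Metric.isOpen_ball
  have hAne : A.Nonempty := by
    obtain ⟨ω, hω⟩ := hΩ.2.1.nonempty
    have hn : ‖ω‖ = 1 := by simpa using hΩ.1 hω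
    have hn2 : ‖(3 / 2 * ρ) • ω‖ = 3 / 2 * ρ := by
      rw [norm_smul, hn, mul_one, Real.norm_of_nonneg (by positivity)]
    refine ⟨(3 / 2 * ρ) • ω, ⟨?_, ?_⟩, ?_⟩
    · rw [hn2]; linarith
    · rw [hn2, smul_smul, inv_mul_cancel₀ (by positivity), one_smul]; exact hω
    · rw [mem_ball_zero_iff, hn2]; linarith
  have hI : 0 < ∫⁻ y in A, ENNReal.ofReal (f y) := by
    rw [setLIntegral_pos_iff hmeas.ennreal_ofReal]
    have : Function.support (fun y => ENNReal.ofReal (f y)) ∩ A = A := by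
      refine inter_eq_right.2 fun y hy => ?_
      simpa using hfpos y hy.1
    rw [this]
    exact hAo.measure_pos volume hAne
  set I := ∫⁻ y in A, ENNReal.ofReal (f y) with hIdef
  have hm : min I 1 ≠ ⊤ := ((min_le_right I 1).trans_lt ENNReal.one_lt_top).ne
  have hm0 : 0 < min I 1 := lt_min hI one_pos
  refine ⟨(min I 1).toReal * 2 ^ (-α), mul_pos (ENNReal.toReal_pos hm0.ne' hm) (by positivity), ?_⟩
  intro x hx
  have hx1 : 2 * ρ < ‖x‖ := hx.1
  calc ENNReal.ofReal ((min I 1).toReal * 2 ^ (-α) * ‖x‖ ^ (-α))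
      = min I 1 * ENNReal.ofReal ((2 * ‖x‖) ^ (-α)) := by
        rw [mul_assoc, ← Real.mul_rpow (by norm_num) (norm_nonneg x),
          ENNReal.ofReal_mul ENNReal.toReal_nonneg, ENNReal.ofReal_toReal hm]
    _ ≤ I * ENNReal.ofReal ((2 * ‖x‖) ^ (-α)) := by
        gcongr
        exact min_le_left _ _
    _ = ∫⁻ y in A, ENNReal.ofReal (f y) * ENNReal.ofReal ((2 * ‖x‖) ^ (-α)) := by
        rw [lintegral_mul_const _ hmeas.ennreal_ofReal]
    _ ≤ ∫⁻ y in A, ENNReal.ofReal (f y * ‖x - y‖ ^ (-α)) := by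
        refine setLIntegral_mono' hAo.measurableSet fun y hy => ?_
        have hy2 : ‖y‖ < 2 * ρ := mem_ball_zero_iff.1 hy.2
        rw [ENNReal.ofReal_mul (hfpos y hy.1).le]
        refine mul_le_mul_right (ENNReal.ofReal_le_ofReal ?_) _
        have h1 : ‖x‖ - ‖y‖ ≤ ‖x - y‖ := norm_sub_norm_le x y
        have h2 : ‖x - y‖ ≤ ‖x‖ + ‖y‖ := norm_sub_le x y
        exact Real.rpow_le_rpow_of_nonpos (by linarith) (by linarith) (by linarith)
    _ ≤ ∫⁻ y in coneGT N ρ Ω, ENNReal.ofReal (f y * ‖x - y‖ ^ (-α)) :=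
        lintegral_mono_set inter_subset_left
end
end

section
/- Let ρ > 0 and 0 ≤ α < N. Let f : C_Ω^ρ → [0, ∞) be measurable and suppose there exist a subdomain Ω₀ of Ω with closure(Ω₀) ⊆ Ω, and constants c, β > 0 such that f(x) ≥ c·|x|^{−β} for all x ∈ C_{Ω₀}^ρ. If N ≥ α + β, then ∫_{C_Ω^ρ} f(y)|x−y|^{−α} dy = +∞ for every x ∈ C_Ω^{2ρ}. -/
open MeasureTheory Real Set
open scoped ENNReal NNReal

noncomputable section

open scoped Pointwise

/-- Lemma 2.2(ii), case `N ≥ α + β`: if `f ≥ c|x|^{-β}` on a subcone and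
`N ≥ α + β`, then the convolution is infinite on `C_Ω^{2ρ}`. -/
theorem conv_infinite_of_lower_bound
    (N : ℕ) (hN : 2 ≤ N) (Ω : Set (Euc N)) (hΩ : IsConeDomain N Ω)
    (ρ α : ℝ) (hρ : 0 < ρ) (hα : 0 ≤ α) (hαN : α < N)
    (f : Euc N → ℝ) (hmeas : Measurable f) (hf0 : ∀ y, 0 ≤ f y)
    (Ω₀ : Set (Euc N)) (hΩ₀ : IsConeDomain N Ω₀) (hsub : closure Ω₀ ⊆ Ω)
    (c β : ℝ) (hc : 0 < c) (hβ : 0 < β)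
    (hlow : ∀ x ∈ coneGT N ρ Ω₀, c * ‖x‖ ^ (-β) ≤ f x)
    (hNab : α + β ≤ (N : ℝ)) :
    ∀ x ∈ coneGT N (2 * ρ) Ω,
      (∫⁻ y in coneGT N ρ Ω, ENNReal.ofReal (f y * ‖x - y‖ ^ (-α))) = ⊤ := by
  intro x hx
  obtain ⟨hS, ⟨⟨w, hw⟩, -⟩, hO⟩ := hΩ₀
  obtain ⟨U, hU, hUe⟩ := isOpen_induced_iff.1 hO
  have hUmem : ∀ z : Euc N, ‖z‖ = 1 → (z ∈ U ↔ z ∈ Ω₀) := by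
    intro z hz
    have := Set.ext_iff.1 hUe ⟨z, by simpa using hz⟩
    simpa using this
  set A : Set (Euc N) := {y | 1 < ‖y‖ ∧ ‖y‖ < 2} ∩ (fun y => ‖y‖⁻¹ • y) ⁻¹' U with hA
  have hAo : IsOpen A := by
    apply ContinuousOn.isOpen_inter_preimage _ _ hU
    · refine ContinuousOn.fun_smul (f := fun y : Euc N => ‖y‖⁻¹) (g := fun y => y) ?_ continuousOn_id
      apply ContinuousOn.inv₀ continuous_norm.continuousOn
      rintro y ⟨h1, -⟩
      linarith
    · exact (isOpen_lt continuous_const continuous_norm).inter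
        (isOpen_lt continuous_norm continuous_const)
  have hwn : ‖w‖ = 1 := by simpa using hS hw
  have hAne : A.Nonempty := by
    have hn : ‖(3 / 2 : ℝ) • w‖ = 3 / 2 := by rw [norm_smul, hwn]; norm_num
    refine ⟨(3 / 2 : ℝ) • w, ⟨by rw [hn]; norm_num, by rw [hn]; norm_num⟩, ?_⟩
    simp only [mem_preimage, hn, smul_smul]
    norm_num
    exact (hUmem w hwn).2 hw
  have hm : volume A ≠ 0 := (hAo.measure_pos volume hAne).ne'
  set R : ℝ := max ‖x‖ 1 with hR
  have hR1 : 1 ≤ R := le_max_right _ _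
  have hRx : ‖x‖ ≤ R := le_max_left _ _
  set r : ℕ → ℝ := fun k => R * 2 ^ k with hr
  have hrR : ∀ k, R ≤ r k := fun k =>
    le_mul_of_one_le_right (by linarith) (one_le_pow₀ (by norm_num))
  have hrp : ∀ k, 0 < r k := fun k => by linarith [hrR k]
  have key : ∀ k, ∀ y ∈ r k • A, r k < ‖y‖ ∧ ‖y‖ < 2 * r k ∧ ‖y‖⁻¹ • y ∈ Ω₀ := by
    rintro k _ ⟨z, ⟨⟨h1, h2⟩, h3⟩, rfl⟩
    have hn : ‖r k • z‖ = r k * ‖z‖ := by rw [norm_smul, Real.norm_of_nonneg (hrp k).le]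
    have hz : ‖z‖ ≠ 0 := by linarith
    simp only [mem_preimage] at h3
    refine ⟨?_, ?_, ?_⟩
    · simp only [hn]; nlinarith [hrp k]
    · simp only [hn]; nlinarith [hrp k]
    · simp only [hn, smul_smul]
      have e : (r k * ‖z‖)⁻¹ * r k = ‖z‖⁻¹ := by
        have := (hrp k).ne'
        field_simp
      rw [e]
      exact (hUmem _ (by rw [norm_smul]; simp [hz])).1 h3
  have hmono : ∀ i j, i < j → 2 * r i ≤ r j := by
    intro i j hij
    have : (2 : ℝ) ^ (i + 1) ≤ 2 ^ j := pow_le_pow_right₀ (by norm_num) hij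
    simp only [hr]
    rw [pow_succ] at this
    nlinarith
  have hdisj : Pairwise (Function.onFun Disjoint fun k => r k • A) := by
    intro i j hij
    rw [Function.onFun, Set.disjoint_left]
    intro y hi hj
    obtain ⟨a1, a2, -⟩ := key i y hi
    obtain ⟨b1, b2, -⟩ := key j y hj
    rcases lt_or_gt_of_ne hij with h | h
    · linarith [hmono i j h]
    · linarith [hmono j i h]
  have hmA : ∀ k, MeasurableSet (r k • A) := fun k => (hAo.smul₀ (hrp k).ne').measurableSet
  have hsubs : (⋃ k, r k • A) ⊆ coneGT N ρ Ω := by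
    intro y hy
    obtain ⟨k, hk⟩ := mem_iUnion.1 hy
    obtain ⟨a1, -, a3⟩ := key k y hk
    exact ⟨by linarith [hrR k, hx.1], hsub (subset_closure a3)⟩
  set K : ℝ := c * 2 ^ (-α) * (2 ^ N)⁻¹ with hK
  have hKp : 0 < K := by positivity
  have hpt : ∀ k, ∀ y ∈ r k • A, K * (r k ^ N)⁻¹ ≤ f y * ‖x - y‖ ^ (-α) := by
    intro k y hy
    obtain ⟨a1, a2, a3⟩ := key k y hy
    have hy1 : 1 ≤ ‖y‖ := by linarith [hrR k]
    have hxy : ‖x‖ < ‖y‖ := by linarith [hrR k]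
    have hpos : 0 < ‖x - y‖ := by
      rw [norm_pos_iff, sub_ne_zero]
      rintro rfl
      exact lt_irrefl _ hxy
    have hle : ‖x - y‖ ≤ 2 * ‖y‖ := by linarith [norm_sub_le x y]
    have h1 := hlow y ⟨by linarith [hrR k, hx.1], a3⟩
    have h2 : (2 * ‖y‖) ^ (-α) ≤ ‖x - y‖ ^ (-α) :=
      Real.rpow_le_rpow_of_nonpos hpos hle (by linarith)
    have h3 : ‖y‖ ^ (-(N : ℝ)) ≤ ‖y‖ ^ (-β) * ‖y‖ ^ (-α) := by
      rw [← Real.rpow_add (by linarith)]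
      exact Real.rpow_le_rpow_of_exponent_le hy1 (by linarith)
    have h4 : (2 ^ N)⁻¹ * (r k ^ N)⁻¹ ≤ ‖y‖ ^ (-(N : ℝ)) := by
      rw [Real.rpow_neg (by linarith), Real.rpow_natCast, ← mul_inv, ← mul_pow]
      exact inv_anti₀ (by positivity) (pow_le_pow_left₀ (by linarith) a2.le N)
    calc K * (r k ^ N)⁻¹ = c * 2 ^ (-α) * ((2 ^ N)⁻¹ * (r k ^ N)⁻¹) := by rw [hK]; ring
      _ ≤ c * 2 ^ (-α) * (‖y‖ ^ (-β) * ‖y‖ ^ (-α)) :=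
        mul_le_mul_of_nonneg_left (h4.trans h3) (by positivity)
      _ = (c * ‖y‖ ^ (-β)) * (2 * ‖y‖) ^ (-α) := by
        rw [Real.mul_rpow (by norm_num) (by linarith)]; ring
      _ ≤ f y * ‖x - y‖ ^ (-α) := mul_le_mul h1 h2 (by positivity) (hf0 y)
  have hpiece : ∀ k, ENNReal.ofReal K * volume A ≤
      ∫⁻ y in r k • A, ENNReal.ofReal (f y * ‖x - y‖ ^ (-α)) := by
    intro k
    calc ENNReal.ofReal K * volume A
        = ENNReal.ofReal (K * (r k ^ N)⁻¹) * volume (r k • A) := by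
          rw [Measure.addHaar_smul_of_nonneg volume (hrp k).le, finrank_euclideanSpace_fin,
            ← mul_assoc, ← ENNReal.ofReal_mul (mul_nonneg hKp.le (by have := hrp k; positivity))]
          congr 2
          have := (hrp k).ne'
          field_simp
      _ = ∫⁻ y in r k • A, ENNReal.ofReal (K * (r k ^ N)⁻¹) := by
          rw [setLIntegral_const]
      _ ≤ _ := setLIntegral_mono' (hmA k) fun y hy => ENNReal.ofReal_le_ofReal (hpt k y hy)
  rw [eq_top_iff]
  calc (⊤ : ℝ≥0∞) = ∑' _ : ℕ, ENNReal.ofReal K * volume A :=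
        (ENNReal.tsum_const_eq_top_of_ne_zero
          (mul_ne_zero (by simpa using hKp) hm)).symm
    _ ≤ ∑' k, ∫⁻ y in r k • A, ENNReal.ofReal (f y * ‖x - y‖ ^ (-α)) :=
        ENNReal.tsum_le_tsum hpiece
    _ = ∫⁻ y in ⋃ k, r k • A, ENNReal.ofReal (f y * ‖x - y‖ ^ (-α)) :=
        (lintegral_iUnion hmA hdisj _).symm
    _ ≤ _ := lintegral_mono_set hsubs
end
end

section
/- Let ρ > 0, 0 ≤ α < N, τ ≥ 0, and β > N − α > 0. Let f : C_Ω^ρ → [0, ∞) be measurable and suppose there exists c > 0 such that f(x) ≤ c·|x|^{−β}·(log(1+|x|))^τ for all x ∈ C_Ω^ρ. Then there exists a constant C > 0 such that for all x ∈ C_Ω^{2ρ}: (a) if β < N then ∫_{C_Ω^ρ} f(y)|x−y|^{−α} dy ≤ C·|x|^{N−α−β}·(log(1+|x|))^τ; (b) if β = N then ∫_{C_Ω^ρ} f(y)|x−y|^{−α} dy ≤ C·|x|^{−α}·(log(1+|x|))^{1+τ}; (c) if β > N then ∫_{C_Ω^ρ} f(y)|x−y|^{−α} dy ≤ C·|x|^{−α}·(log(1+|x|))^τ.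 -/
open MeasureTheory Real Set
open scoped ENNReal NNReal

noncomputable section

/-- The surface constant. -/
def surfK (N : ℕ) : ℝ := N * (volume : Measure (Euc N)).real (Metric.ball 0 1)

lemma surfK_nonneg (N : ℕ) : 0 ≤ surfK N := by
  unfold surfK; positivity

lemma radial (N : ℕ) (hN : 2 ≤ N) (p : ℝ) (I : Set ℝ) (hI : MeasurableSet I)
    (hint : IntegrableOn (fun r : ℝ => r ^ (p + N - 1)) (I ∩ Ioi 0)) :
    ∫⁻ y in {y : Euc N | ‖y‖ ∈ I}, ENNReal.ofReal (‖y‖ ^ p) =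
      ENNReal.ofReal (surfK N * ∫ r in I ∩ Ioi 0, r ^ (p + N - 1)) := by
  have : Nontrivial (Euc N) := by
    have : Nonempty (Fin N) := ⟨⟨0, by omega⟩⟩
    infer_instance
  have hS : MeasurableSet {y : Euc N | ‖y‖ ∈ I} := measurable_norm hI
  have hdim : Module.finrank ℝ (Euc N) = N := by simp
  have hfun : EqOn (fun r : ℝ => r ^ (N - 1) • I.indicator (fun r : ℝ => r ^ p) r)
      (I.indicator (fun r : ℝ => r ^ (p + N - 1))) (Ioi 0) := by
    intro r hr
    have hr : 0 < r := hr
    by_cases h : r ∈ I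
    · simp only [h, indicator_of_mem, smul_eq_mul]
      rw [← Real.rpow_natCast, ← Real.rpow_add hr]
      congr 1
      rw [Nat.cast_sub (by omega)]; push_cast; ring
    · simp [h]
  have hint1 : IntegrableOn (fun r : ℝ => r ^ (N - 1) • I.indicator (fun r : ℝ => r ^ p) r)
      (Ioi 0) := by
    rw [integrableOn_congr_fun hfun measurableSet_Ioi, IntegrableOn,
      integrable_indicator_iff hI, IntegrableOn, Measure.restrict_restrict hI]
    exact hint
  have hint2 : Integrable (fun y : Euc N => I.indicator (fun r : ℝ => r ^ p) ‖y‖) volume := by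
    rw [integrable_fun_norm_addHaar volume (f := I.indicator (fun r : ℝ => r ^ p)), hdim]
    exact hint1
  have h1 : ∫⁻ y in {y : Euc N | ‖y‖ ∈ I}, ENNReal.ofReal (‖y‖ ^ p) =
      ∫⁻ y : Euc N, ENNReal.ofReal (I.indicator (fun r : ℝ => r ^ p) ‖y‖) := by
    rw [← lintegral_indicator hS]
    congr 1
    ext y
    by_cases h : ‖y‖ ∈ I <;> simp [h, indicator]
  rw [h1, ← ofReal_integral_eq_lintegral_ofReal hint2]
  · rw [integral_fun_norm_addHaar volume (I.indicator (fun r : ℝ => r ^ p)), hdim,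
      setIntegral_congr_fun measurableSet_Ioi hfun, integral_indicator hI,
      Measure.restrict_restrict hI]
    congr 1
    simp [surfK, mul_assoc]
  · refine ae_of_all _ fun y => ?_
    by_cases h : ‖y‖ ∈ I
    · simp only [h, indicator_of_mem, Pi.zero_apply]
      positivity
    · simp [h]

lemma radial_small (N : ℕ) (hN : 2 ≤ N) (p a : ℝ) (ha : 0 < a) (hp : 0 < p + N) :
    ∫⁻ y in {y : Euc N | ‖y‖ ≤ a}, ENNReal.ofReal (‖y‖ ^ p) =
      ENNReal.ofReal (surfK N * (a ^ (p + N) / (p + N))) := by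
  have hI : Iic a ∩ Ioi 0 = Ioc 0 a := by ext; simp [and_comm]
  have := radial N hN p (Iic a) measurableSet_Iic (by
    rw [hI, ← intervalIntegrable_iff_integrableOn_Ioc_of_le ha.le]
    apply intervalIntegral.intervalIntegrable_rpow'
    linarith)
  rw [hI, ← intervalIntegral.integral_of_le ha.le, integral_rpow (by left; linarith)] at this
  simp only [mem_Iic, sub_add_cancel] at this
  rw [this, Real.zero_rpow hp.ne', sub_zero]

lemma radial_large (N : ℕ) (hN : 2 ≤ N) (p a : ℝ) (ha : 0 < a) (hp : p + N < 0) :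
    ∫⁻ y in {y : Euc N | a < ‖y‖}, ENNReal.ofReal (‖y‖ ^ p) =
      ENNReal.ofReal (surfK N * (a ^ (p + N) / (-(p + N)))) := by
  have hI : Ioi a ∩ Ioi 0 = Ioi a := by
    rw [Ioi_inter_Ioi, sup_of_le_left ha.le]
  have := radial N hN p (Ioi a) measurableSet_Ioi (by
    rw [hI]
    exact integrableOn_Ioi_rpow_of_lt (by linarith) ha)
  rw [hI, integral_Ioi_rpow_of_lt (by linarith) ha] at this
  simp only [mem_Ioi, sub_add_cancel] at this
  rw [this, div_neg, neg_div]

lemma radial_log (N : ℕ) (hN : 2 ≤ N) (a b : ℝ) (ha : 0 < a) (hab : a ≤ b) :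
    ∫⁻ y in {y : Euc N | a < ‖y‖ ∧ ‖y‖ ≤ b}, ENNReal.ofReal (‖y‖ ^ (-(N : ℝ))) =
      ENNReal.ofReal (surfK N * Real.log (b / a)) := by
  have hI : Ioc a b ∩ Ioi 0 = Ioc a b := by
    apply inter_eq_left.2
    intro r hr
    exact ha.trans hr.1
  have hfun : ∀ r : ℝ, r ^ (-(N : ℝ) + N - 1) = r⁻¹ := by
    intro r
    rw [neg_add_cancel, zero_sub, Real.rpow_neg_one]
  have h0 : (0 : ℝ) ∉ uIcc a b := by
    rw [uIcc_of_le hab]; intro h; exact absurd h.1 (not_le.2 ha)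
  have := radial N hN (-(N : ℝ)) (Ioc a b) measurableSet_Ioc (by
    simp_rw [hI, hfun]
    rw [← intervalIntegrable_iff_integrableOn_Ioc_of_le hab]
    exact intervalIntegral.intervalIntegrable_inv (fun r hr h => h0 (h ▸ hr)) continuousOn_id)
  simp_rw [hI, hfun] at this
  rw [← intervalIntegral.integral_of_le hab, integral_inv h0] at this
  exact this

lemma log_growth {R r ε R0 : ℝ} (hε : 0 < ε) (hR0 : 0 < R0) (hR : R0 ≤ R) (hr : R ≤ r) :
    Real.log (1 + r) ≤ (1 + 1 / (ε * Real.log (1 + R0))) * (r / R) ^ ε * Real.log (1 + R) := by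
  have hRp : 0 < R := hR0.trans_le hR
  have ht : 1 ≤ r / R := by rwa [le_div_iff₀ hRp, one_mul]
  have hL0 : 0 < Real.log (1 + R0) := Real.log_pos (by linarith)
  have hL : Real.log (1 + R0) ≤ Real.log (1 + R) := Real.log_le_log (by linarith) (by linarith)
  have h1 : Real.log (1 + r) ≤ Real.log (r / R) + Real.log (1 + R) := by
    rw [← Real.log_mul (by positivity) (by positivity)]
    apply Real.log_le_log (by linarith)
    have : r / R * (1 + R) = r / R + r := by field_simp
    linarith
  have h2 : Real.log (r / R) ≤ (r / R) ^ ε / ε := Real.log_le_rpow_div (by linarith) hε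
  have h3 : 1 ≤ (r / R) ^ ε := Real.one_le_rpow ht hε.le
  have h4 : (r / R) ^ ε / ε ≤ (r / R) ^ ε / ε * (Real.log (1 + R) / Real.log (1 + R0)) := by
    apply le_mul_of_one_le_right (by positivity)
    rwa [le_div_iff₀ hL0, one_mul]
  have h5 : Real.log (1 + R) ≤ (r / R) ^ ε * Real.log (1 + R) :=
    le_mul_of_one_le_left (by linarith) h3
  calc _ ≤ (r / R) ^ ε / ε * (Real.log (1 + R) / Real.log (1 + R0))
        + (r / R) ^ ε * Real.log (1 + R) := by linarith
    _ = _ := by field_simp; ring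

/-- The dominating kernel. -/
def domK (N : ℕ) (c α β τ : ℝ) (x y : Euc N) : ℝ :=
  c * ‖y‖ ^ (-β) * (Real.log (1 + ‖y‖)) ^ τ * ‖x - y‖ ^ (-α)

lemma domK_meas (N : ℕ) (c α β τ : ℝ) (x : Euc N) :
    Measurable fun y => ENNReal.ofReal (domK N c α β τ x y) := by
  unfold domK
  fun_prop

lemma log_one_add_nonneg {r : ℝ} (hr : 0 ≤ r) : 0 ≤ Real.log (1 + r) :=
  Real.log_nonneg (by linarith)

lemma ball_shift (N : ℕ) (hN : 2 ≤ N) (p a : ℝ) (ha : 0 < a) (hp : 0 < p + N) (x : Euc N) :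
    ∫⁻ y in {y : Euc N | ‖x - y‖ ≤ a}, ENNReal.ofReal (‖x - y‖ ^ p) =
      ENNReal.ofReal (surfK N * (a ^ (p + N) / (p + N))) := by
  rw [← radial_small N hN p a ha hp]
  have h1 : MeasurableSet {y : Euc N | ‖x - y‖ ≤ a} :=
    measurableSet_le (by fun_prop) (by fun_prop)
  have h2 : MeasurableSet {y : Euc N | ‖y‖ ≤ a} :=
    measurableSet_le (by fun_prop) (by fun_prop)
  rw [← lintegral_indicator h1, ← lintegral_indicator h2]
  exact lintegral_sub_left_eq_self
    ({y : Euc N | ‖y‖ ≤ a}.indicator fun y => ENNReal.ofReal (‖y‖ ^ p)) x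

lemma mid_bound (N : ℕ) (hN : 2 ≤ N) (c α β τ : ℝ) (hc : 0 < c) (hα : 0 ≤ α) (hαN : α < N)
    (hτ : 0 ≤ τ) (hβ : (N : ℝ) - α < β) :
    ∃ C ≥ 0, ∀ x : Euc N, 0 < ‖x‖ →
      ∫⁻ y in {y : Euc N | ‖x‖ / 2 < ‖y‖ ∧ ‖y‖ ≤ 2 * ‖x‖}, ENNReal.ofReal (domK N c α β τ x y) ≤
        ENNReal.ofReal (C * ‖x‖ ^ ((N : ℝ) - α - β) * (Real.log (1 + ‖x‖)) ^ τ) := by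
  have hK := surfK_nonneg N
  have hNα : 0 < -α + N := by linarith
  refine ⟨c * (1/2 : ℝ) ^ (-β) * 2 ^ τ * (surfK N * (3 ^ (-α + N) / (-α + N))), by positivity, ?_⟩
  intro x hx
  have hL := log_one_add_nonneg hx.le
  set R := ‖x‖ with hR
  set A := c * (R / 2) ^ (-β) * (2 * Real.log (1 + R)) ^ τ with hA
  have hA0 : 0 ≤ A := by positivity
  calc _ ≤ ∫⁻ y in {y : Euc N | R / 2 < ‖y‖ ∧ ‖y‖ ≤ 2 * R},
        ENNReal.ofReal A * ENNReal.ofReal (‖x - y‖ ^ (-α)) := by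
        apply setLIntegral_mono (by fun_prop)
        rintro y ⟨h1, h2⟩
        rw [← ENNReal.ofReal_mul hA0]
        apply ENNReal.ofReal_le_ofReal
        unfold domK
        have hy : 0 < ‖y‖ := by linarith
        have hLy := log_one_add_nonneg hy.le
        have e1 : ‖y‖ ^ (-β) ≤ (R / 2) ^ (-β) :=
          Real.rpow_le_rpow_of_nonpos (by positivity) h1.le (by linarith)
        have e2 : Real.log (1 + ‖y‖) ≤ 2 * Real.log (1 + R) := by
          have : 2 * Real.log (1 + R) = Real.log ((1 + R) ^ 2) := by
            rw [Real.log_pow]; norm_num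
          rw [this]
          apply Real.log_le_log (by linarith)
          nlinarith [sq_nonneg R]
        rw [hA]
        gcongr
    _ ≤ ∫⁻ y in {y : Euc N | ‖x - y‖ ≤ 3 * R},
        ENNReal.ofReal A * ENNReal.ofReal (‖x - y‖ ^ (-α)) := by
        apply lintegral_mono_set
        rintro y ⟨h1, h2⟩
        have := norm_sub_le x y
        show ‖x - y‖ ≤ 3 * R
        linarith
    _ = ENNReal.ofReal (A * (surfK N * ((3 * R) ^ (-α + N) / (-α + N)))) := by
        rw [lintegral_const_mul _ (by fun_prop), ball_shift N hN _ _ (by positivity) hNα,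
          ENNReal.ofReal_mul hA0]
    _ = _ := by
        congr 1
        rw [hA, Real.mul_rpow (by norm_num) hx.le, Real.mul_rpow (by norm_num) hL,
          div_eq_mul_one_div R 2, Real.mul_rpow hx.le (by norm_num),
          show (N : ℝ) - α - β = -β + (-α + N) by ring, Real.rpow_add hx (-β) (-α + N)]
        ring

lemma far_bound (N : ℕ) (hN : 2 ≤ N) (c α β τ ρ : ℝ) (hc : 0 < c) (hα : 0 ≤ α)
    (hτ : 0 ≤ τ) (hβ : (N : ℝ) - α < β) (hρ : 0 < ρ) :
    ∃ C ≥ 0, ∀ x : Euc N, ρ < ‖x‖ →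
      ∫⁻ y in {y : Euc N | 2 * ‖x‖ < ‖y‖}, ENNReal.ofReal (domK N c α β τ x y) ≤
        ENNReal.ofReal (C * ‖x‖ ^ ((N : ℝ) - α - β) * (Real.log (1 + ‖x‖)) ^ τ) := by
  have hK := surfK_nonneg N
  set ε := (α + β - N) / (τ + 1) with hε
  have hε0 : 0 < ε := div_pos (by linarith) (by linarith)
  have hετ : ε * τ + ε = α + β - N := by rw [hε]; field_simp
  set q := -β - α + ε * τ with hq
  have hqN : q + N < 0 := by linarith
  have hqN' : 0 < -(q + N) := by linarith
  have hL0 : 0 < Real.log (1 + ρ) := Real.log_pos (by linarith)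
  set M := 1 + 1 / (ε * Real.log (1 + ρ)) with hM
  have hM0 : 0 ≤ M := by positivity
  refine ⟨c * M ^ τ * (1/2 : ℝ) ^ (-α) * (surfK N * (2 ^ (q + N) / (-(q + N)))), by positivity, ?_⟩
  intro x hx
  have hx0 : 0 < ‖x‖ := hρ.trans hx
  have hL := log_one_add_nonneg hx0.le
  set R := ‖x‖ with hR
  set A := c * M ^ τ * R ^ (-(ε * τ)) * (Real.log (1 + R)) ^ τ * (1/2 : ℝ) ^ (-α) with hA
  have hA0 : 0 ≤ A := by positivity
  calc _ ≤ ∫⁻ y in {y : Euc N | 2 * R < ‖y‖},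
        ENNReal.ofReal A * ENNReal.ofReal (‖y‖ ^ q) := by
        apply setLIntegral_mono (by fun_prop)
        intro y h1
        have h1 : 2 * R < ‖y‖ := h1
        rw [← ENNReal.ofReal_mul hA0]
        apply ENNReal.ofReal_le_ofReal
        unfold domK
        have hy : 0 < ‖y‖ := by linarith
        have hLy := log_one_add_nonneg hy.le
        have e1 : ‖x - y‖ ^ (-α) ≤ (‖y‖ * (1 / 2)) ^ (-α) := by
          apply Real.rpow_le_rpow_of_nonpos (by positivity) _ (by linarith)
          have := norm_sub_norm_le y x
          rw [norm_sub_rev] at this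
          linarith
        have e2 : Real.log (1 + ‖y‖) ≤ M * (‖y‖ / R) ^ ε * Real.log (1 + R) :=
          log_growth hε0 hρ hx.le (by linarith)
        calc _ ≤ c * ‖y‖ ^ (-β) * (M * (‖y‖ / R) ^ ε * Real.log (1 + R)) ^ τ
              * (‖y‖ * (1 / 2)) ^ (-α) := by gcongr
          _ = _ := by
            rw [Real.mul_rpow (by positivity) hL, Real.mul_rpow hM0 (by positivity),
              ← Real.rpow_mul (by positivity), Real.div_rpow hy.le hx0.le,
              Real.mul_rpow hy.le (by norm_num), hA, hq, Real.rpow_add hy, sub_eq_add_neg,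
              Real.rpow_add hy, Real.rpow_neg hx0.le]
            ring
    _ = ENNReal.ofReal (A * (surfK N * ((2 * R) ^ (q + N) / (-(q + N))))) := by
        rw [lintegral_const_mul _ (by fun_prop), radial_large N hN _ _ (by positivity) hqN,
          ENNReal.ofReal_mul hA0]
    _ = _ := by
        congr 1
        rw [hA, Real.mul_rpow (by norm_num) hx0.le,
          show (N : ℝ) - α - β = -(ε * τ) + (q + N) by rw [hq]; ring,
          Real.rpow_add hx0 (-(ε * τ)) (q + N)]
        ring

lemma near_bound (N : ℕ) (c α β τ ρ : ℝ) (hc : 0 < c) (hα : 0 ≤ α)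
    (hτ : 0 ≤ τ) (hρ : 0 < ρ) (x : Euc N) (hx : 2 * ρ < ‖x‖) :
    ∫⁻ y in {y : Euc N | ρ < ‖y‖ ∧ ‖y‖ ≤ ‖x‖ / 2}, ENNReal.ofReal (domK N c α β τ x y) ≤
      ENNReal.ofReal (c * (1/2 : ℝ) ^ (-α) * ‖x‖ ^ (-α) * (Real.log (1 + ‖x‖)) ^ τ) *
        ∫⁻ y in {y : Euc N | ρ < ‖y‖ ∧ ‖y‖ ≤ ‖x‖}, ENNReal.ofReal (‖y‖ ^ (-β)) := by
  have hx0 : 0 < ‖x‖ := by linarith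
  have hL := log_one_add_nonneg hx0.le
  rw [← lintegral_const_mul _ (by fun_prop)]
  refine le_trans ?_ (lintegral_mono_set
    (s := {y : Euc N | ρ < ‖y‖ ∧ ‖y‖ ≤ ‖x‖ / 2}) ?_)
  · apply setLIntegral_mono (by fun_prop)
    rintro y ⟨h1, h2⟩
    rw [← ENNReal.ofReal_mul (by positivity)]
    apply ENNReal.ofReal_le_ofReal
    unfold domK
    have hy : 0 < ‖y‖ := by linarith
    have hLy := log_one_add_nonneg hy.le
    have e1 : ‖x - y‖ ^ (-α) ≤ (1 / 2 * ‖x‖) ^ (-α) := by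
      apply Real.rpow_le_rpow_of_nonpos (by positivity) _ (by linarith)
      have := norm_sub_norm_le x y
      linarith
    have e2 : Real.log (1 + ‖y‖) ≤ Real.log (1 + ‖x‖) :=
      Real.log_le_log (by linarith) (by linarith)
    calc _ ≤ c * ‖y‖ ^ (-β) * (Real.log (1 + ‖x‖)) ^ τ * (1 / 2 * ‖x‖) ^ (-α) := by gcongr
      _ = _ := by
        rw [Real.mul_rpow (by norm_num) hx0.le]
        ring
  · rintro y ⟨h1, h2⟩
    exact ⟨h1, by linarith⟩

lemma total_bound (N : ℕ) (hN : 2 ≤ N) (Ω : Set (Euc N))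
    (ρ α τ β : ℝ) (hρ : 0 < ρ) (hα : 0 ≤ α) (hαN : α < N) (hτ : 0 ≤ τ)
    (hβ : (N : ℝ) - α < β) (f : Euc N → ℝ) (c : ℝ) (hc : 0 < c)
    (hupper : ∀ x ∈ coneGT N ρ Ω, f x ≤ c * ‖x‖ ^ (-β) * (Real.log (1 + ‖x‖)) ^ τ) :
    ∃ C1 > 0, ∃ C2 > 0, ∀ x ∈ coneGT N (2 * ρ) Ω, ∀ J : ℝ, 0 ≤ J →
      ∫⁻ y in {y : Euc N | ρ < ‖y‖ ∧ ‖y‖ ≤ ‖x‖}, ENNReal.ofReal (‖y‖ ^ (-β)) ≤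
        ENNReal.ofReal J →
      (∫⁻ y in coneGT N ρ Ω, ENNReal.ofReal (f y * ‖x - y‖ ^ (-α))) ≤
          ENNReal.ofReal (C1 * ‖x‖ ^ ((N : ℝ) - α - β) * (Real.log (1 + ‖x‖)) ^ τ +
            C2 * ‖x‖ ^ (-α) * (Real.log (1 + ‖x‖)) ^ τ * J) := by
  obtain ⟨Cm, hCm, hm⟩ := mid_bound N hN c α β τ hc hα hαN hτ hβ
  obtain ⟨Cf, hCf, hf⟩ := far_bound N hN c α β τ ρ hc hα hτ hβ hρ
  refine ⟨Cm + Cf + 1, by positivity, c * (1/2 : ℝ) ^ (-α), by positivity, ?_⟩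
  rintro x ⟨hx, -⟩ J hJ hJle
  have hx0 : 0 < ‖x‖ := by linarith
  have hL := log_one_add_nonneg hx0.le
  have hn := near_bound N c α β τ ρ hc hα hτ hρ x hx
  have hm := hm x hx0
  have hf := hf x (by linarith)
  calc _ ≤ ∫⁻ y in coneGT N ρ Ω, ENNReal.ofReal (domK N c α β τ x y) := by
        apply setLIntegral_mono (domK_meas ..)
        intro y hy
        apply ENNReal.ofReal_le_ofReal
        have := hupper y hy
        unfold domK
        gcongr
    _ ≤ ∫⁻ y in {y : Euc N | ρ < ‖y‖ ∧ ‖y‖ ≤ ‖x‖ / 2} ∪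
          ({y : Euc N | ‖x‖ / 2 < ‖y‖ ∧ ‖y‖ ≤ 2 * ‖x‖} ∪ {y : Euc N | 2 * ‖x‖ < ‖y‖}),
          ENNReal.ofReal (domK N c α β τ x y) := by
        apply lintegral_mono_set
        rintro y ⟨hy, -⟩
        simp only [mem_union, mem_ofPred_eq]
        by_cases h1 : ‖y‖ ≤ ‖x‖ / 2
        · exact Or.inl ⟨hy, h1⟩
        · by_cases h2 : ‖y‖ ≤ 2 * ‖x‖
          · exact Or.inr (Or.inl ⟨not_le.1 h1, h2⟩)
          · exact Or.inr (Or.inr (not_le.1 h2))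
    _ ≤ ENNReal.ofReal (c * (1/2 : ℝ) ^ (-α) * ‖x‖ ^ (-α) * (Real.log (1 + ‖x‖)) ^ τ) *
          ENNReal.ofReal J +
        (ENNReal.ofReal (Cm * ‖x‖ ^ ((N : ℝ) - α - β) * (Real.log (1 + ‖x‖)) ^ τ) +
          ENNReal.ofReal (Cf * ‖x‖ ^ ((N : ℝ) - α - β) * (Real.log (1 + ‖x‖)) ^ τ)) := by
        refine (lintegral_union_le _ _ _).trans (add_le_add ?_
          ((lintegral_union_le _ _ _).trans (add_le_add hm hf)))
        exact hn.trans (by gcongr)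
    _ ≤ _ := by
        rw [← ENNReal.ofReal_mul (by positivity), ← ENNReal.ofReal_add (by positivity)
          (by positivity), ← ENNReal.ofReal_add (by positivity) (by positivity)]
        apply ENNReal.ofReal_le_ofReal
        have : 0 ≤ ‖x‖ ^ ((N : ℝ) - α - β) * (Real.log (1 + ‖x‖)) ^ τ := by positivity
        nlinarith

/-- Lemma 2.2(iii): upper bounds for the convolution of a function dominated by
`c|x|^{-β} log^τ(1+|x|)` with `β > N - α > 0`. -/
theorem conv_upper_bounds
    (N : ℕ) (hN : 2 ≤ N) (Ω : Set (Euc N)) (hΩ : IsConeDomain N Ω)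
    (ρ α τ β : ℝ) (hρ : 0 < ρ) (hα : 0 ≤ α) (hαN : α < N) (hτ : 0 ≤ τ)
    (hβ : (N : ℝ) - α < β)
    (f : Euc N → ℝ) (hmeas : Measurable f) (hf0 : ∀ y, 0 ≤ f y)
    (c : ℝ) (hc : 0 < c)
    (hupper : ∀ x ∈ coneGT N ρ Ω, f x ≤ c * ‖x‖ ^ (-β) * (Real.log (1 + ‖x‖)) ^ τ) :
    ∃ C > 0, ∀ x ∈ coneGT N (2 * ρ) Ω,
      (β < (N : ℝ) →
        (∫⁻ y in coneGT N ρ Ω, ENNReal.ofReal (f y * ‖x - y‖ ^ (-α))) ≤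
          ENNReal.ofReal (C * ‖x‖ ^ ((N : ℝ) - α - β) * (Real.log (1 + ‖x‖)) ^ τ)) ∧
      (β = (N : ℝ) →
        (∫⁻ y in coneGT N ρ Ω, ENNReal.ofReal (f y * ‖x - y‖ ^ (-α))) ≤
          ENNReal.ofReal (C * ‖x‖ ^ (-α) * (Real.log (1 + ‖x‖)) ^ (1 + τ))) ∧
      ((N : ℝ) < β →
        (∫⁻ y in coneGT N ρ Ω, ENNReal.ofReal (f y * ‖x - y‖ ^ (-α))) ≤
          ENNReal.ofReal (C * ‖x‖ ^ (-α) * (Real.log (1 + ‖x‖)) ^ τ)) := by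
  have hK := surfK_nonneg N
  obtain ⟨C1, hC1, C2, hC2, H⟩ := total_bound N hN Ω ρ α τ β hρ hα hαN hτ hβ f c hc hupper
  rcases lt_trichotomy β (N : ℝ) with hlt | heq | hgt
  · have hpN : 0 < -β + N := by linarith
    refine ⟨C1 + C2 * (surfK N / (-β + N)), by positivity, fun x hx => ⟨fun _ => ?_,
      fun h => absurd h hlt.ne, fun h => absurd h hlt.not_gt⟩⟩
    have hx1 : 2 * ρ < ‖x‖ := hx.1
    have hx0 : 0 < ‖x‖ := by linarith
    refine (H x hx (surfK N * (‖x‖ ^ (-β + N) / (-β + N))) (by positivity) ?_).trans ?_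
    · rw [← radial_small N hN _ _ hx0 hpN]
      exact lintegral_mono_set fun y hy => hy.2
    · apply ENNReal.ofReal_le_ofReal
      rw [show (N : ℝ) - α - β = -α + (-β + N) by ring, Real.rpow_add hx0]
      apply le_of_eq
      ring
  · have hL0 : 0 < Real.log (1 + 2 * ρ) := Real.log_pos (by linarith)
    set Q := |Real.log ρ| / Real.log (1 + 2 * ρ) with hQ
    refine ⟨C1 / Real.log (1 + 2 * ρ) + C2 * (surfK N * (1 + Q)), by positivity,
      fun x hx => ⟨fun h => absurd heq h.ne, fun _ => ?_, fun h => absurd heq h.ne'⟩⟩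
    have hx1 : 2 * ρ < ‖x‖ := hx.1
    have hx0 : 0 < ‖x‖ := by linarith
    have hLL : Real.log (1 + 2 * ρ) ≤ Real.log (1 + ‖x‖) :=
      Real.log_le_log (by linarith) (by linarith)
    have hL : 0 < Real.log (1 + ‖x‖) := hL0.trans_le hLL
    have hJ : Real.log (‖x‖ / ρ) ≤ (1 + Q) * Real.log (1 + ‖x‖) := by
      rw [Real.log_div hx0.ne' hρ.ne']
      have e1 : Real.log ‖x‖ ≤ Real.log (1 + ‖x‖) := Real.log_le_log hx0 (by linarith)
      have e2 : -Real.log ρ ≤ Q * Real.log (1 + 2 * ρ) := by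
        rw [hQ, div_mul_cancel₀ _ hL0.ne']
        exact neg_le_abs _
      have e3 : Q * Real.log (1 + 2 * ρ) ≤ Q * Real.log (1 + ‖x‖) := by gcongr
      linarith
    refine (H x hx (surfK N * ((1 + Q) * Real.log (1 + ‖x‖))) (by positivity) ?_).trans ?_
    · rw [heq, radial_log N hN _ _ hρ (by linarith)]
      apply ENNReal.ofReal_le_ofReal
      gcongr
    · apply ENNReal.ofReal_le_ofReal
      rw [show (N : ℝ) - α - β = -α by rw [heq]; ring, Real.rpow_add hL, Real.rpow_one]
      have e4 : C1 ≤ C1 / Real.log (1 + 2 * ρ) * Real.log (1 + ‖x‖) := by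
        rw [div_mul_eq_mul_div, le_div_iff₀ hL0]
        gcongr
      calc _ ≤ C1 / Real.log (1 + 2 * ρ) * Real.log (1 + ‖x‖) * ‖x‖ ^ (-α) *
            Real.log (1 + ‖x‖) ^ τ + C2 * ‖x‖ ^ (-α) * Real.log (1 + ‖x‖) ^ τ *
              (surfK N * ((1 + Q) * Real.log (1 + ‖x‖))) := by gcongr
        _ = _ := by ring
  · have hpN : -β + N < 0 := by linarith
    have hpN' : 0 < -(-β + N) := by linarith
    refine ⟨C1 * (2 * ρ) ^ (-β + N) + C2 * (surfK N * (ρ ^ (-β + N) / (-(-β + N)))),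
      by positivity, fun x hx => ⟨fun h => absurd h hgt.not_gt,
      fun h => absurd h hgt.ne', fun _ => ?_⟩⟩
    have hx1 : 2 * ρ < ‖x‖ := hx.1
    have hx0 : 0 < ‖x‖ := by linarith
    have hL := log_one_add_nonneg hx0.le
    refine (H x hx (surfK N * (ρ ^ (-β + N) / (-(-β + N)))) (by positivity) ?_).trans ?_
    · rw [← radial_large N hN _ _ hρ hpN]
      exact lintegral_mono_set fun y hy => hy.1
    · apply ENNReal.ofReal_le_ofReal
      rw [show (N : ℝ) - α - β = -α + (-β + N) by ring, Real.rpow_add hx0]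
      have e1 : ‖x‖ ^ (-β + N) ≤ (2 * ρ) ^ (-β + N) :=
        Real.rpow_le_rpow_of_nonpos (by positivity) hx1.le hpN.le
      calc _ ≤ C1 * (‖x‖ ^ (-α) * (2 * ρ) ^ (-β + N)) * Real.log (1 + ‖x‖) ^ τ +
            C2 * ‖x‖ ^ (-α) * Real.log (1 + ‖x‖) ^ τ *
              (surfK N * (ρ ^ (-β + N) / (-(-β + N)))) := by gcongr
        _ = _ := by ring
end
end

section
/- Assume 0 ≤ α < N, p, q > 0, μ ∈ ℝ, ρ > 0, and that the Dirichlet eigenpair hypothesis holds for (Ω, λ₁, φ). Let u be a positive solution of (E): −Δu − μ|x|^{−2}u ≥ (|x|^{−α} * u^p) u^q in C_Ω^ρ. Let η : ℝ → ℝ be C², compactly supported, with 0 ≤ η ≤ 1, support of η contained in [1,4], and η ≡ 1 on [2,3]; for R > 0 set η_R(x) = η(|x|/R). Then for every λ > 4 and every m with 0 ≤ m < 1, there exists a constant C > 0, independent of R, such that for all R > max{ρ, e}: (∫_{C_Ω^ρ} u(x)^{(p+q−m)/2}·φ(x/|x|)^{1/2}·η_R(x)^{λ/2} dx)² ≤ C·R^{α−2}·∫_{C_Ω^ρ}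 u(x)^{1−m}·φ(x/|x|)·η_R(x)^{λ−2} dx. -/
open MeasureTheory Real Set
open scoped ENNReal NNReal

noncomputable section

/-! ### Partial derivatives and the calculus of the Laplacian -/

/-- The `i`-th partial derivative. -/
def pd {N : ℕ} (i : Fin N) (f : Euc N → ℝ) (x : Euc N) : ℝ :=
  fderiv ℝ f x (EuclideanSpace.single i 1)

lemma pd_contDiffAt {N : ℕ} (i : Fin N) {f : Euc N → ℝ} {x : Euc N} {m n : WithTop ℕ∞}
    (h : ContDiffAt ℝ n f x) (hmn : m + 1 ≤ n) : ContDiffAt ℝ m (pd i f) x :=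
  (h.fderiv_right hmn).clm_apply contDiffAt_const

lemma lap_eq_s15 {N : ℕ} {f : Euc N → ℝ} {x : Euc N} (h : ContDiffAt ℝ 2 f x) :
    lap N f x = ∑ i, pd i (pd i f) x := by
  unfold lap
  refine Finset.sum_congr rfl fun i _ => ?_
  rw [iteratedFDeriv_two_apply]
  have h1 : DifferentiableAt ℝ (fderiv ℝ f) x :=
    (h.fderiv_right (m := 1) (by norm_num)).differentiableAt (by norm_num)
  have : pd i (pd i f) x = fderiv ℝ (fun y => (fderiv ℝ f y) (EuclideanSpace.single i 1)) x
    (EuclideanSpace.single i 1) := rfl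
  rw [this, fderiv_clm_apply h1 (by fun_prop)]
  simp

lemma pd_mul {N : ℕ} (i : Fin N) {f g : Euc N → ℝ} {x : Euc N}
    (hf : DifferentiableAt ℝ f x) (hg : DifferentiableAt ℝ g x) :
    pd i (fun y => f y * g y) x = f x * pd i g x + g x * pd i f x := by
  unfold pd
  rw [fderiv_fun_mul hf hg]
  simp

lemma pd_comp {N : ℕ} (i : Fin N) {f : ℝ → ℝ} {w : Euc N → ℝ} {x : Euc N} {f' : ℝ}
    (hf : HasDerivAt f f' (w x)) (hw : DifferentiableAt ℝ w x) :
    pd i (fun y => f (w y)) x = f' * pd i w x := by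
  unfold pd
  have := (hf.hasFDerivAt.comp x hw.hasFDerivAt).fderiv
  have h2 : (fun y => f (w y)) = f ∘ w := rfl
  rw [h2, this]
  simp [mul_comm]

lemma pd_congr {N : ℕ} (i : Fin N) {f g : Euc N → ℝ} {x : Euc N} (h : f =ᶠ[nhds x] g) :
    pd i f x = pd i g x := by
  unfold pd; rw [h.fderiv_eq]

lemma lap_comp {N : ℕ} {f f' : ℝ → ℝ} {w : Euc N → ℝ} {x : Euc N} {f2 : ℝ}
    (hf : ContDiffAt ℝ 2 f (w x))
    (hf1 : ∀ᶠ t in nhds (w x), HasDerivAt f (f' t) t) (hf2 : HasDerivAt f' f2 (w x))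
    (hw : ContDiffAt ℝ 2 w x) :
    lap N (fun y => f (w y)) x = f' (w x) * lap N w x + f2 * ∑ i, pd i w x ^ 2 := by
  rw [lap_eq_s15 (f := fun y => f (w y)) (ContDiffAt.comp x hf hw), lap_eq_s15 hw, Finset.mul_sum, Finset.mul_sum,
    ← Finset.sum_add_distrib]
  refine Finset.sum_congr rfl fun i _ => ?_
  have hev : pd i (fun y => f (w y)) =ᶠ[nhds x] fun y => f' (w y) * pd i w y := by
    have h1 := hw.continuousAt.eventually hf1
    have h2 : ∀ᶠ y in nhds x, ContDiffAt ℝ 2 w y := hw.eventually (by simp)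
    filter_upwards [h1, h2] with y hy1 hy2
    exact pd_comp i hy1 (hy2.differentiableAt (by norm_num))
  have hwd := hw.differentiableAt (by norm_num)
  have hpd : DifferentiableAt ℝ (pd i w) x :=
    (pd_contDiffAt i hw (m := 1) (by norm_num)).differentiableAt (by norm_num)
  have hfw : DifferentiableAt ℝ (fun y => f' (w y)) x := hf2.differentiableAt.comp x hwd
  rw [pd_congr i hev, pd_mul i hfw hpd, pd_comp i hf2 hwd]
  ring

lemma lap_mul {N : ℕ} {f g : Euc N → ℝ} {x : Euc N}
    (hf : ContDiffAt ℝ 2 f x) (hg : ContDiffAt ℝ 2 g x) :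
    lap N (fun y => f y * g y) x =
      f x * lap N g x + g x * lap N f x + 2 * ∑ i, pd i f x * pd i g x := by
  rw [lap_eq_s15 (hf.mul hg), lap_eq_s15 hf, lap_eq_s15 hg, Finset.mul_sum, Finset.mul_sum, Finset.mul_sum,
    ← Finset.sum_add_distrib, ← Finset.sum_add_distrib]
  refine Finset.sum_congr rfl fun i _ => ?_
  have hev : pd i (fun y => f y * g y) =ᶠ[nhds x] fun y => f y * pd i g y + g y * pd i f y := by
    have h1 : ∀ᶠ y in nhds x, ContDiffAt ℝ 2 f y := hf.eventually (by simp)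
    have h2 : ∀ᶠ y in nhds x, ContDiffAt ℝ 2 g y := hg.eventually (by simp)
    filter_upwards [h1, h2] with y hy1 hy2
    exact pd_mul i (hy1.differentiableAt (by norm_num)) (hy2.differentiableAt (by norm_num))
  have hfd := hf.differentiableAt (by norm_num)
  have hgd := hg.differentiableAt (by norm_num)
  have hpf : DifferentiableAt ℝ (pd i f) x :=
    (pd_contDiffAt i hf (m := 1) (by norm_num)).differentiableAt (by norm_num)
  have hpg : DifferentiableAt ℝ (pd i g) x :=
    (pd_contDiffAt i hg (m := 1) (by norm_num)).differentiableAt (by norm_num)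
  have hadd : pd i (fun y => f y * pd i g y + g y * pd i f y) x =
      pd i (fun y => f y * pd i g y) x + pd i (fun y => g y * pd i f y) x := by
    have h1 : DifferentiableAt ℝ (fun y => f y * pd i g y) x := hfd.mul hpg
    have h2 : DifferentiableAt ℝ (fun y => g y * pd i f y) x := hgd.mul hpf
    change fderiv ℝ (fun y => f y * pd i g y + g y * pd i f y) x (EuclideanSpace.single i 1) = _
    rw [fderiv_fun_add h1 h2]
    rfl
  rw [pd_congr i hev, hadd, pd_mul i hfd hpg, pd_mul i hgd hpf]
  ring

lemma lap_congr {N : ℕ} {f g : Euc N → ℝ} {x : Euc N} (h : f =ᶠ[nhds x] g) :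
    lap N f x = lap N g x := by
  unfold lap
  rw [(h.iteratedFDeriv ℝ 2).eq_of_nhds]

/-- products of a function continuous on `U` and a continuous function supported in `K ⊆ U` -/
lemma integrable_mul_cs {N : ℕ} {U K : Set (Euc N)} (hU : IsOpen U) (hK : IsCompact K)
    (hKU : K ⊆ U) {f g : Euc N → ℝ} (hf : ContinuousOn f U) (hg : ContinuousOn g U)
    (h0 : ∀ x, x ∉ K → g x = 0) : Integrable (fun x => f x * g x) := by
  have hc : Continuous (fun x => f x * g x) := by
    rw [continuous_iff_continuousAt]
    intro x
    by_cases hx : x ∈ U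
    · exact ((hf.continuousAt (hU.mem_nhds hx)).mul (hg.continuousAt (hU.mem_nhds hx)))
    · have hx' : x ∈ Kᶜ := fun h => hx (hKU h)
      have : (fun x => f x * g x) =ᶠ[nhds x] fun _ => 0 := by
        filter_upwards [hK.isClosed.isOpen_compl.mem_nhds hx'] with y hy
        simp [h0 y hy]
      exact continuousAt_const.congr this.symm
  exact hc.integrable_of_hasCompactSupport (HasCompactSupport.intro hK fun x hx => by simp [h0 x hx])

lemma green {N : ℕ} {U K : Set (Euc N)} (hU : IsOpen U) (hK : IsCompact K)
    (hKU : K ⊆ U) {v ψ : Euc N → ℝ} (hv : ContDiffOn ℝ 2 v U) (hψ : ContDiffOn ℝ 2 ψ U)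
    (h0 : ∀ x, x ∉ K → ψ x = 0) :
    Integrable (fun x => lap N v x * ψ x) ∧ Integrable (fun x => v x * lap N ψ x) ∧
    ∫ x, lap N v x * ψ x = ∫ x, v x * lap N ψ x := by
  have hvA : ∀ x ∈ U, ContDiffAt ℝ 2 v x := fun x hx => hv.contDiffAt (hU.mem_nhds hx)
  have hev0 : ∀ x, x ∉ K → ψ =ᶠ[nhds x] fun _ => 0 := by
    intro x hx
    filter_upwards [hK.isClosed.isOpen_compl.mem_nhds hx] with y hy using h0 y hy
  have hψA : ∀ x, ContDiffAt ℝ 2 ψ x := by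
    intro x
    by_cases hx : x ∈ U
    · exact hψ.contDiffAt (hU.mem_nhds hx)
    · exact contDiffAt_const.congr_of_eventuallyEq (hev0 x fun h => hx (hKU h))
  have hpd0 : ∀ i x, x ∉ K → pd i ψ x = 0 := by
    intro i x hx
    rw [pd_congr i (hev0 x hx)]; simp [pd]
  have hpdev0 : ∀ i x, x ∉ K → pd i ψ =ᶠ[nhds x] fun _ => 0 := by
    intro i x hx
    filter_upwards [hK.isClosed.isOpen_compl.mem_nhds hx] with y hy using hpd0 i y hy
  have hpd20 : ∀ i x, x ∉ K → pd i (pd i ψ) x = 0 := by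
    intro i x hx
    rw [pd_congr i (hpdev0 i x hx)]; simp [pd]
  have hpv : ∀ i, ∀ x ∈ U, ContDiffAt ℝ 1 (pd i v) x := fun i x hx =>
    pd_contDiffAt i (hvA x hx) (by norm_num)
  have hpv2 : ∀ i, ∀ x ∈ U, ContDiffAt ℝ 0 (pd i (pd i v)) x := fun i x hx =>
    pd_contDiffAt i (hpv i x hx) (by norm_num)
  have hpψ : ∀ i x, ContDiffAt ℝ 1 (pd i ψ) x := fun i x =>
    pd_contDiffAt i (hψA x) (by norm_num)
  have hpψ2 : ∀ i x, ContDiffAt ℝ 0 (pd i (pd i ψ)) x := fun i x =>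
    pd_contDiffAt i (hpψ i x) (by norm_num)
  have cvx : ContinuousOn v U := hv.continuousOn
  have cψ : ContinuousOn ψ U := hψ.continuousOn
  have cpv : ∀ i, ContinuousOn (pd i v) U := fun i x hx => (hpv i x hx).continuousAt.continuousWithinAt
  have cpv2 : ∀ i, ContinuousOn (pd i (pd i v)) U :=
    fun i x hx => (hpv2 i x hx).continuousAt.continuousWithinAt
  have cpψ : ∀ i, ContinuousOn (pd i ψ) U := fun i x hx => (hpψ i x).continuousAt.continuousWithinAt
  have cpψ2 : ∀ i, ContinuousOn (pd i (pd i ψ)) U :=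
    fun i x hx => (hpψ2 i x).continuousAt.continuousWithinAt
  have tsub : ∀ g : Euc N → ℝ, (∀ x, x ∉ K → g x = 0) → tsupport g ⊆ U := by
    intro g hg
    refine subset_trans (closure_minimal ?_ hK.isClosed) hKU
    intro x hx
    by_contra h
    exact hx (hg x h)
  have I1 : ∀ i, Integrable (fun x => pd i (pd i v) x * ψ x) := fun i =>
    integrable_mul_cs hU hK hKU (cpv2 i) cψ h0
  have I2 : ∀ i, Integrable (fun x => pd i v x * pd i ψ x) := fun i =>
    integrable_mul_cs hU hK hKU (cpv i) (cpψ i) (hpd0 i)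
  have I3 : ∀ i, Integrable (fun x => v x * pd i (pd i ψ) x) := fun i =>
    integrable_mul_cs hU hK hKU cvx (cpψ2 i) (hpd20 i)
  have E : ∀ i, ∫ x, pd i (pd i v) x * ψ x = ∫ x, v x * pd i (pd i ψ) x := by
    intro i
    have e1 : ∫ x, v x * pd i (pd i ψ) x = -∫ x, pd i v x * pd i ψ x :=
      integral_mul_fderiv_eq_neg_fderiv_mul_of_integrable (f := v) (g := pd i ψ) (I2 i) (I3 i)
        (integrable_mul_cs hU hK hKU cvx (cpψ i) (hpd0 i))
        (fun x hx => (hvA x (tsub _ (hpd0 i) hx)).differentiableAt (by norm_num))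
        (fun x hx => (hpψ i x).differentiableAt (by norm_num))
    have e2 : ∫ x, pd i v x * pd i ψ x = -∫ x, pd i (pd i v) x * ψ x :=
      integral_mul_fderiv_eq_neg_fderiv_mul_of_integrable (f := pd i v) (g := ψ) (I1 i) (I2 i)
        (integrable_mul_cs hU hK hKU (cpv i) cψ h0)
        (fun x hx => (hpv i x (tsub _ h0 hx)).differentiableAt (by norm_num))
        (fun x hx => (hψA x).differentiableAt (by norm_num))
    rw [e1, e2]; simp
  have L1 : (fun x => lap N v x * ψ x) = fun x => ∑ i, pd i (pd i v) x * ψ x := by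
    ext x
    by_cases hx : x ∈ K
    · rw [lap_eq_s15 (hvA x (hKU hx)), Finset.sum_mul]
    · simp [h0 x hx]
  have L2 : (fun x => v x * lap N ψ x) = fun x => ∑ i, v x * pd i (pd i ψ) x := by
    ext x
    rw [lap_eq_s15 (hψA x), Finset.mul_sum]
  rw [L1, L2]
  refine ⟨integrable_finsetSum _ fun i _ => I1 i, integrable_finsetSum _ fun i _ => I3 i, ?_⟩
  rw [integral_finsetSum _ fun i _ => I1 i, integral_finsetSum _ fun i _ => I3 i]
  exact Finset.sum_congr rfl fun i _ => E i

/-! ### The convex truncation -/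

lemma exists_trunc (ε : ℝ) (hε : 0 < ε) : ∃ h : ℝ → ℝ, ContDiff ℝ 2 h ∧
    (∀ t ≤ ε, h t = 0) ∧ (∀ t, 0 ≤ t → 0 ≤ h t ∧ h t ≤ t ∧ t - 2 * ε ≤ h t) ∧
    (∀ t, 0 ≤ deriv h t ∧ deriv h t ≤ 1) ∧ (∀ t, 0 ≤ deriv (deriv h) t) := by
  set g : ℝ → ℝ := fun t => Real.smoothTransition (t / ε - 1) with hg
  have gc : ContDiff ℝ 1 g := by
    have h1 : ContDiff ℝ 1 (fun t : ℝ => t / ε - 1) := by fun_prop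
    exact (Real.smoothTransition.contDiff (n := 1)).comp h1
  have gcont : Continuous g := gc.continuous
  have gmono : Monotone g := by
    intro a b hab
    apply Real.smoothTransition.monotone
    have := div_le_div_of_nonneg_right hab hε.le
    linarith
  have g0 : ∀ t ≤ ε, g t = 0 := by
    intro t ht
    apply Real.smoothTransition.zero_of_nonpos
    have := (div_le_one hε).2 ht
    linarith
  have g1 : ∀ t, 2 * ε ≤ t → g t = 1 := by
    intro t ht
    apply Real.smoothTransition.one_of_one_le
    have := (le_div_iff₀ hε).2 ht
    linarith
  have gn : ∀ t, 0 ≤ g t := fun t => Real.smoothTransition.nonneg _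
  have gl : ∀ t, g t ≤ 1 := fun t => Real.smoothTransition.le_one _
  set h : ℝ → ℝ := fun t => ∫ s in (0:ℝ)..t, g s with hh
  have hd : ∀ t, HasDerivAt h (g t) t := fun t =>
    intervalIntegral.integral_hasDerivAt_right (gcont.intervalIntegrable _ _)
      (gcont.stronglyMeasurableAtFilter _ _) gcont.continuousAt
  have hderiv : deriv h = g := funext fun t => (hd t).deriv
  have i1 : ∀ a b : ℝ, IntervalIntegrable (fun _ : ℝ => (1:ℝ)) volume a b := fun a b =>
    intervalIntegrable_const
  refine ⟨h, ?_, ?_, ?_, ?_, ?_⟩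
  · have : (2 : WithTop ℕ∞) = 1 + 1 := by norm_num
    rw [this, contDiff_succ_iff_deriv]
    refine ⟨fun t => (hd t).differentiableAt, by simp, ?_⟩
    rw [hderiv]; exact gc
  · intro t ht
    have : ∫ s in (0:ℝ)..t, g s = ∫ s in (0:ℝ)..t, (0:ℝ) := by
      apply intervalIntegral.integral_congr
      intro s hs
      apply g0
      have := hs.2
      exact this.trans (max_le hε.le ht)
    simp [hh, this]
  · intro t ht
    refine ⟨intervalIntegral.integral_nonneg ht fun s _ => gn s, ?_, ?_⟩
    · have := intervalIntegral.integral_mono_on ht (gcont.intervalIntegrable _ _) (i1 0 t)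
        fun s _ => gl s
      simpa using this
    · by_cases h2 : t ≤ 2 * ε
      · have : 0 ≤ h t := intervalIntegral.integral_nonneg ht fun s _ => gn s
        linarith
      · push Not at h2
        have e : h t = (∫ s in (0:ℝ)..(2*ε), g s) + ∫ s in (2*ε)..t, g s :=
          (intervalIntegral.integral_add_adjacent_intervals (gcont.intervalIntegrable _ _)
            (gcont.intervalIntegrable _ _)).symm
        have e2 : ∫ s in (2*ε)..t, g s = ∫ s in (2*ε)..t, (1:ℝ) := by
          apply intervalIntegral.integral_congr
          intro s hs
          apply g1
          rw [uIcc_of_le h2.le] at hs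
          exact hs.1
        have : 0 ≤ ∫ s in (0:ℝ)..(2*ε), g s :=
          intervalIntegral.integral_nonneg (by linarith) fun s _ => gn s
        rw [e2] at e
        simp at e
        linarith
  · intro t; rw [hderiv]; exact ⟨gn t, gl t⟩
  · intro t; rw [hderiv]; exact gmono.deriv_nonneg

/-! ### Radial functions -/

lemma normsq_contDiff (N : ℕ) (R : ℝ) : ContDiff ℝ 2 (fun y : Euc N => ‖y‖ ^ 2 / R ^ 2) :=
  (contDiff_norm_sq ℝ).div_const _

lemma pd_normsq {N : ℕ} (i : Fin N) (R : ℝ) (x : Euc N) :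
    pd i (fun y : Euc N => ‖y‖ ^ 2 / R ^ 2) x = 2 / R ^ 2 * x i := by
  unfold pd
  have h := ((hasStrictFDerivAt_norm_sq x).hasFDerivAt.mul_const ((R ^ 2)⁻¹)).fderiv
  simp only [div_eq_mul_inv]
  rw [h]
  simp [EuclideanSpace.inner_single_right]
  ring

lemma pd_coord {N : ℕ} (i : Fin N) (c : ℝ) (x : Euc N) :
    pd i (fun y : Euc N => c * y i) x = c := by
  unfold pd
  have h : HasFDerivAt (fun y : Euc N => c * y i)
      (c • (EuclideanSpace.proj i : Euc N →L[ℝ] ℝ)) x :=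
    (c • (EuclideanSpace.proj i : Euc N →L[ℝ] ℝ)).hasFDerivAt
  rw [h.fderiv]
  simp

lemma lap_normsq {N : ℕ} (R : ℝ) (x : Euc N) :
    lap N (fun y : Euc N => ‖y‖ ^ 2 / R ^ 2) x = N * (2 / R ^ 2) := by
  rw [lap_eq_s15 (normsq_contDiff N R).contDiffAt]
  have : ∀ i : Fin N, pd i (pd i (fun y : Euc N => ‖y‖ ^ 2 / R ^ 2)) x = 2 / R ^ 2 := by
    intro i
    have e : pd i (fun y : Euc N => ‖y‖ ^ 2 / R ^ 2) = fun y => 2 / R ^ 2 * y i :=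
      funext fun y => pd_normsq i R y
    rw [e, pd_coord]
  simp [this]

lemma radial_bound {N : ℕ} {η : ℝ → ℝ} (hη : ContDiff ℝ 2 η)
    (hη01 : ∀ t, 0 ≤ η t ∧ η t ≤ 1) (hηsupp : tsupport η ⊆ Set.Icc 1 4)
    {lam : ℝ} (hlam : 4 < lam) :
    ∃ M, 0 ≤ M ∧ ∀ R : ℝ, 0 < R → ∀ x : Euc N, x ≠ 0 →
      ContDiffAt ℝ 2 (fun y : Euc N => η (‖y‖ / R) ^ lam) x ∧
      |lap N (fun y : Euc N => η (‖y‖ / R) ^ lam) x| ≤ M * (R ^ 2)⁻¹ * η (‖x‖ / R) ^ (lam - 2) ∧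
      ∃ c : ℝ, ∀ i, pd i (fun y : Euc N => η (‖y‖ / R) ^ lam) x = c * x i := by
  set f : ℝ → ℝ := fun s => η (Real.sqrt s) with hf
  have fcd : ∀ s, 0 < s → ContDiffAt ℝ 2 f s := fun s hs =>
    hη.contDiffAt.comp s (Real.contDiffAt_sqrt hs.ne')
  have hfon : ContDiffOn ℝ 2 f (Set.Ioi 0) := fun s hs => (fcd s hs).contDiffWithinAt
  have hfon1 : ContDiffOn ℝ 1 (deriv f) (Set.Ioi 0) :=
    hfon.deriv_of_isOpen isOpen_Ioi (by norm_num)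
  have hfon2 : ContDiffOn ℝ 0 (deriv (deriv f)) (Set.Ioi 0) :=
    hfon1.deriv_of_isOpen isOpen_Ioi (by norm_num)
  have f1cd : ∀ s, 0 < s → ContDiffAt ℝ 1 (deriv f) s := fun s hs =>
    ((hfon.deriv_of_isOpen isOpen_Ioi (by norm_num)).contDiffAt (isOpen_Ioi.mem_nhds hs))
  have fd : ∀ s, 0 < s → HasDerivAt f (deriv f s) s := fun s hs =>
    ((fcd s hs).differentiableAt (by norm_num)).hasDerivAt
  have f1d : ∀ s, 0 < s → HasDerivAt (deriv f) (deriv (deriv f) s) s := fun s hs =>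
    ((f1cd s hs).differentiableAt (by norm_num)).hasDerivAt
  have f2c : ∀ s, 0 < s → ContinuousAt (deriv (deriv f)) s := fun s hs =>
    (hfon2.contDiffAt (isOpen_Ioi.mem_nhds hs)).continuousAt
  obtain ⟨M1, hM1⟩ := (isCompact_Icc (a := (1:ℝ)) (b := 16)).exists_bound_of_continuousOn
    (f := deriv f) (fun s hs => (f1cd s (by linarith [hs.1])).continuousAt.continuousWithinAt)
  obtain ⟨M2, hM2⟩ := (isCompact_Icc (a := (1:ℝ)) (b := 16)).exists_bound_of_continuousOn
    (f := deriv (deriv f)) (fun s hs => (f2c s (by linarith [hs.1])).continuousWithinAt)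
  have hM1' : 0 ≤ M1 := (norm_nonneg _).trans (hM1 1 (by norm_num))
  have hM2' : 0 ≤ M2 := (norm_nonneg _).trans (hM2 1 (by norm_num))
  refine ⟨lam * (M1 * (2 * N) + M2 * 64) + lam * (lam - 1) * (M1 ^ 2 * 64), by
    have : 0 ≤ lam * (lam - 1) := mul_nonneg (by linarith) (by linarith)
    have : 0 ≤ lam := by linarith
    positivity, ?_⟩
  intro R hR x hx
  set w : Euc N → ℝ := fun y => ‖y‖ ^ 2 / R ^ 2 with hw
  have hwx : 0 < w x := by
    have := norm_pos_iff.2 hx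
    positivity
  have hsqrt : ∀ y : Euc N, Real.sqrt (w y) = ‖y‖ / R := by
    intro y
    simp only [hw]
    rw [← div_pow, Real.sqrt_sq (by positivity)]
  have hfw : ∀ y : Euc N, f (w y) = η (‖y‖ / R) := fun y => by simp only [hf, hsqrt]
  have hG : (fun y : Euc N => η (‖y‖ / R) ^ lam) = fun y => (fun t : ℝ => t ^ lam) (f (w y)) := by
    ext y; simp only [hfw]
  have wcd : ContDiffAt ℝ 2 w x := (normsq_contDiff N R).contDiffAt
  have Gcd : ContDiffAt ℝ 2 (fun y => f (w y)) x := (fcd _ hwx).comp x wcd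
  have rcd : ∀ t : ℝ, ContDiffAt ℝ 2 (fun t : ℝ => t ^ lam) t := fun t =>
    (Real.contDiff_rpow_const_of_le (n := 2) (by norm_num; linarith)).contDiffAt
  have rd : ∀ t : ℝ, HasDerivAt (fun t : ℝ => t ^ lam) (lam * t ^ (lam - 1)) t := fun t =>
    Real.hasDerivAt_rpow_const (Or.inr (by linarith))
  have rd2 : ∀ t : ℝ, HasDerivAt (fun t : ℝ => lam * t ^ (lam - 1))
      (lam * ((lam - 1) * t ^ (lam - 1 - 1))) t := fun t =>
    (Real.hasDerivAt_rpow_const (Or.inr (by linarith))).const_mul lam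
  have pdG : ∀ i, pd i (fun y => f (w y)) x = deriv f (w x) * (2 / R ^ 2 * x i) := by
    intro i
    rw [pd_comp i (fd _ hwx) (wcd.differentiableAt (by norm_num)), pd_normsq]
  have sumsq : ∑ i, x i ^ 2 = ‖x‖ ^ 2 := by
    rw [EuclideanSpace.norm_sq_eq]; simp
  have hsum : ∑ i, pd i w x ^ 2 = 4 / R ^ 2 * w x := by
    simp only [hw, pd_normsq, mul_pow]
    rw [← Finset.mul_sum, sumsq]
    field_simp
    norm_num
  have hsum2 : ∑ i, pd i (fun y => f (w y)) x ^ 2 = deriv f (w x) ^ 2 * (4 / R ^ 2 * w x) := by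
    rw [← hsum, Finset.mul_sum]
    refine Finset.sum_congr rfl fun i _ => ?_
    rw [pdG, pd_normsq]; ring
  have lapG : lap N (fun y => f (w y)) x =
      deriv f (w x) * (N * (2 / R ^ 2)) + deriv (deriv f) (w x) * (4 / R ^ 2 * w x) := by
    rw [lap_comp (fcd _ hwx) ((lt_mem_nhds hwx).mono fun s hs => fd s hs) (f1d _ hwx) wcd,
      lap_normsq, hsum]
  refine ⟨?_, ?_, ?_⟩
  · rw [hG]; exact (rcd _).comp x Gcd
  · rw [hG, lap_comp (f := fun t : ℝ => t ^ lam) (f' := fun t => lam * t ^ (lam - 1))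
      (rcd _) (Filter.Eventually.of_forall rd) (rd2 _) Gcd, lapG, hsum2, ← hfw]
    have e2 : lam - 1 - 1 = lam - 2 := by ring
    rw [e2]
    by_cases h0 : f (w x) = 0
    · rw [h0, Real.zero_rpow (by linarith), Real.zero_rpow (by linarith)]
      simp
    · have hmem : ‖x‖ / R ∈ Set.Icc (1:ℝ) 4 := by
        apply hηsupp
        apply subset_tsupport
        rw [Function.mem_support, ← hfw]
        exact h0
      have hw2 : w x = (‖x‖ / R) ^ 2 := by simp only [hw, div_pow]
      have hwI : w x ∈ Set.Icc (1:ℝ) 16 := by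
        rw [hw2]; constructor <;> nlinarith [hmem.1, hmem.2]
      have b1 := hM1 _ hwI
      have b2 := hM2 _ hwI
      have f0 : 0 ≤ f (w x) := (hη01 _).1
      have f1 : f (w x) ≤ 1 := (hη01 _).2
      have fpos : 0 < f (w x) := lt_of_le_of_ne f0 (Ne.symm h0)
      set a := f (w x)
      set P := a ^ (lam - 2) with hP
      have P0 : 0 ≤ P := by positivity
      have hA : a ^ (lam - 1) ≤ P := Real.rpow_le_rpow_of_exponent_ge fpos f1 (by linarith)
      have hA0 : 0 ≤ a ^ (lam - 1) := by positivity
      set d1 := deriv f (w x)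
      set d2 := deriv (deriv f) (w x)
      rw [Real.norm_eq_abs] at b1 b2
      set r := (R ^ 2)⁻¹ with hr
      have r0 : 0 ≤ r := by positivity
      have l0 : 0 ≤ lam := by linarith
      have l1 : 0 ≤ lam - 1 := by linarith
      have q1 : |d1 * (N * (2 / R ^ 2)) + d2 * (4 / R ^ 2 * w x)| ≤ (M1 * (2 * N) + M2 * 64) * r := by
        have : d1 * (N * (2 / R ^ 2)) + d2 * (4 / R ^ 2 * w x) = (d1 * (2 * N) + d2 * (4 * w x)) * r := by
          rw [hr]; ring
        rw [this, abs_mul, abs_of_nonneg r0]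
        refine mul_le_mul_of_nonneg_right ((abs_add_le _ _).trans (add_le_add ?_ ?_)) r0
        · rw [abs_mul, abs_of_nonneg (by positivity : (0:ℝ) ≤ 2 * N)]
          exact mul_le_mul_of_nonneg_right b1 (by positivity)
        · rw [abs_mul, abs_of_nonneg (by positivity : (0:ℝ) ≤ 4 * w x)]
          exact mul_le_mul b2 (by linarith [hwI.2]) (by positivity) hM2'
      have q2 : |d1 ^ 2 * (4 / R ^ 2 * w x)| ≤ (M1 ^ 2 * 64) * r := by
        have : d1 ^ 2 * (4 / R ^ 2 * w x) = (d1 ^ 2 * (4 * w x)) * r := by rw [hr]; ring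
        rw [this, abs_of_nonneg (by positivity)]
        refine mul_le_mul_of_nonneg_right ?_ r0
        refine mul_le_mul ?_ (by linarith [hwI.2]) (by positivity) (by positivity)
        rw [← sq_abs]; exact pow_le_pow_left₀ (abs_nonneg _) b1 2
      refine (abs_add_le _ _).trans ?_
      rw [abs_mul, abs_mul (lam * ((lam - 1) * P)), abs_of_nonneg (by positivity : 0 ≤ lam * a ^ (lam - 1)),
        abs_of_nonneg (by positivity : 0 ≤ lam * ((lam - 1) * P))]
      calc lam * a ^ (lam - 1) * |d1 * (N * (2 / R ^ 2)) + d2 * (4 / R ^ 2 * w x)| +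
            lam * ((lam - 1) * P) * |d1 ^ 2 * (4 / R ^ 2 * w x)|
          ≤ lam * P * ((M1 * (2 * N) + M2 * 64) * r) + lam * ((lam - 1) * P) * ((M1 ^ 2 * 64) * r) := by
            gcongr
        _ = _ := by ring
  · refine ⟨lam * f (w x) ^ (lam - 1) * (deriv f (w x) * (2 / R ^ 2)), fun i => ?_⟩
    rw [hG, pd_comp i (rd _) (Gcd.differentiableAt (by norm_num)), pdG]
    ring

/-! ### Cones -/

lemma coneGT_isOpen {N : ℕ} {Ω : Set (Euc N)} (hΩ : IsConeDomain N Ω) {ρ : ℝ} (hρ : 0 ≤ ρ) :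
    IsOpen (coneGT N ρ Ω) := by
  obtain ⟨h1, -, h3⟩ := hΩ
  obtain ⟨V, hV, hVe⟩ := isOpen_induced_iff.1 h3
  have key : coneGT N ρ Ω = {x | ρ < ‖x‖} ∩ (fun x : Euc N => ‖x‖⁻¹ • x) ⁻¹' V := by
    ext x
    simp only [coneGT, mem_ofPred_eq, mem_inter_iff, mem_preimage]
    refine and_congr_right fun hx => ?_
    have hx0 : ‖x‖ ≠ 0 := by linarith
    have hs : ‖x‖⁻¹ • x ∈ Metric.sphere (0 : Euc N) 1 := by
      simp [norm_smul, hx0]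
    have := Set.ext_iff.1 hVe ⟨_, hs⟩
    simpa using this.symm
  rw [key]
  have ho : IsOpen {x : Euc N | ρ < ‖x‖} := isOpen_lt continuous_const continuous_norm
  refine ContinuousOn.isOpen_inter_preimage ?_ ho hV
  intro x hx
  have hx0 : ‖x‖ ≠ 0 := by have : ρ < ‖x‖ := hx; linarith
  exact ((continuousAt_id.norm.inv₀ hx0).smul continuousAt_id).continuousWithinAt

lemma coneGT_zero {N : ℕ} {Ω : Set (Euc N)} : coneGT N 0 Ω = cone N Ω := by
  ext x; simp [coneGT, cone]

lemma coneGT_sub {N : ℕ} {Ω : Set (Euc N)} {ρ : ℝ} (hρ : 0 ≤ ρ) : coneGT N ρ Ω ⊆ cone N Ω := by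
  rw [← coneGT_zero]
  exact fun x hx => ⟨lt_of_le_of_lt hρ hx.1, hx.2⟩

lemma homog_euler {N : ℕ} {φ : Euc N → ℝ} {x : Euc N}
    (hd : DifferentiableAt ℝ (fun y : Euc N => φ (‖y‖⁻¹ • y)) x) :
    ∑ i, pd i (fun y : Euc N => φ (‖y‖⁻¹ • y)) x * x i = 0 := by
  set Φ : Euc N → ℝ := fun y => φ (‖y‖⁻¹ • y) with hΦ
  have e : ∑ i, pd i Φ x * x i = fderiv ℝ Φ x x := by
    have hx : x = ∑ i, x i • (EuclideanSpace.single i (1:ℝ) : Euc N) := by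
      ext j
      simp [Finset.sum_apply, Pi.single_apply]
    conv_rhs => rw [hx]
    rw [map_sum]
    refine Finset.sum_congr rfl fun i _ => ?_
    rw [map_smul, smul_eq_mul, mul_comm, ← hx]
    rfl
  rw [e]
  have hx1 : DifferentiableAt ℝ Φ ((1:ℝ) • x) := by simpa using hd
  have hl : HasDerivAt (fun t : ℝ => t • x) x 1 := by
    simpa using (hasDerivAt_id (1:ℝ)).smul_const x
  have h1 : HasDerivAt (fun t : ℝ => Φ (t • x)) (fderiv ℝ Φ ((1:ℝ) • x) x) 1 :=
    HasFDerivAt.comp_hasDerivAt (l := Φ) (f := fun t : ℝ => t • x) (1:ℝ) hx1.hasFDerivAt hl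
  have h2 : (fun t : ℝ => Φ (t • x)) =ᶠ[nhds 1] fun _ => Φ x := by
    filter_upwards [lt_mem_nhds (zero_lt_one (α := ℝ))] with t ht
    simp only [hΦ]
    congr 1
    rw [norm_smul, Real.norm_eq_abs, abs_of_pos ht, smul_smul]
    congr 1
    field_simp
  have h3 := (hasDerivAt_const (1:ℝ) (Φ x)).congr_of_eventuallyEq h2
  have := h1.unique h3
  simpa using this

/-! ### The test-function estimate -/

lemma eta_zero {η : ℝ → ℝ} (hηsupp : tsupport η ⊆ Set.Icc 1 4) {t : ℝ} (ht : t ∉ Set.Icc (1:ℝ) 4) :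
    η t = 0 := by
  by_contra h
  exact ht (hηsupp (subset_tsupport _ h))

lemma annulus {N : ℕ} {R : ℝ} (hR : 0 < R) {x : Euc N} (h : ‖x‖ / R ∈ Set.Icc (1:ℝ) 4) :
    R ≤ ‖x‖ ∧ ‖x‖ ≤ 4 * R := by
  have h1 := (le_div_iff₀ hR).1 h.1
  have h2 := (div_le_iff₀ hR).1 h.2
  constructor <;> linarith

lemma rhs_integrable {N : ℕ} {Ω : Set (Euc N)} (hΩ : IsConeDomain N Ω)
    {lam1 : ℝ} {φ : Euc N → ℝ} (hphi : DirichletEigenpair N Ω lam1 φ)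
    {ρ : ℝ} (hρ : 0 < ρ) {u : Euc N → ℝ}
    (huc : ContinuousOn u (closure (coneGT N ρ Ω)))
    (hpos : ∀ x ∈ coneGT N ρ Ω, 0 < u x)
    {η : ℝ → ℝ} (hη : Continuous η)
    (hη01 : ∀ t, 0 ≤ η t ∧ η t ≤ 1) (hηsupp : tsupport η ⊆ Set.Icc 1 4)
    {lam m : ℝ} (hlam : 4 < lam) (hm1 : m < 1) {R : ℝ} (hR : 0 < R) :
    IntegrableOn (fun x => u x ^ (1 - m) * φ (‖x‖⁻¹ • x) * η (‖x‖ / R) ^ (lam - 2))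
      (coneGT N ρ Ω) := by
  set U := coneGT N ρ Ω with hU
  have hUo : IsOpen U := coneGT_isOpen hΩ hρ.le
  set F := fun x : Euc N => u x ^ (1 - m) * φ (‖x‖⁻¹ • x) * η (‖x‖ / R) ^ (lam - 2) with hF
  have hKc : IsCompact (closure U ∩ Metric.closedBall (0 : Euc N) (4 * R)) :=
    (isCompact_closedBall _ _).inter_left isClosed_closure
  obtain ⟨V, hV⟩ := hKc.exists_bound_of_continuousOn (f := u) (huc.mono inter_subset_left)
  have hcont : ContinuousOn F U := by
    refine ((ContinuousOn.rpow_const (huc.mono subset_closure) fun x hx => Or.inl (hpos x hx).ne').mul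
      (hphi.smoothExt.continuousOn.mono (coneGT_sub hρ.le))).mul ?_
    refine Continuous.continuousOn ?_
    exact (hη.comp (continuous_norm.div_const R)).rpow_const fun x => Or.inr (by linarith)
  have hA : IntegrableOn F (U ∩ Metric.closedBall (0 : Euc N) (4 * R)) := by
    have hms : MeasurableSet (U ∩ Metric.closedBall (0 : Euc N) (4 * R)) :=
      hUo.measurableSet.inter measurableSet_closedBall
    refine IntegrableOn.of_bound (C := V ^ (1 - m)) ?_ ?_ ?_
    · exact ((measure_mono inter_subset_right).trans_lt measure_closedBall_lt_top)
    · exact (hcont.mono inter_subset_left).aestronglyMeasurable hms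
    · refine (ae_restrict_iff' hms).2 (Filter.Eventually.of_forall fun x hx => ?_)
      have hux := hpos x hx.1
      have h1 := hV x ⟨subset_closure hx.1, hx.2⟩
      rw [Real.norm_eq_abs, abs_of_pos hux] at h1
      have hφ0 := hphi.pos _ hx.1.2
      have hφ1 := hphi.le_one _ (subset_closure hx.1.2)
      have hη0 := (hη01 (‖x‖ / R)).1
      have hη1 := (hη01 (‖x‖ / R)).2
      have e1 : u x ^ (1 - m) ≤ V ^ (1 - m) := Real.rpow_le_rpow hux.le h1 (by linarith)
      have e2 : η (‖x‖ / R) ^ (lam - 2) ≤ 1 := Real.rpow_le_one hη0 hη1 (by linarith)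
      have e3 : 0 ≤ η (‖x‖ / R) ^ (lam - 2) := Real.rpow_nonneg hη0 _
      have e4 : 0 ≤ u x ^ (1 - m) := Real.rpow_nonneg hux.le _
      have e5 : 0 ≤ V ^ (1 - m) := e4.trans e1
      simp only [hF]
      rw [Real.norm_eq_abs, abs_of_nonneg (by positivity)]
      calc u x ^ (1 - m) * φ (‖x‖⁻¹ • x) * η (‖x‖ / R) ^ (lam - 2)
          ≤ V ^ (1 - m) * 1 * 1 := by gcongr
        _ = _ := by ring
  refine hA.of_forall_sdiff_eq_zero hUo.measurableSet ?_
  intro x hx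
  have : ‖x‖ / R ∉ Set.Icc (1:ℝ) 4 := by
    intro h
    exact hx.2 ⟨hx.1, by simpa using (annulus hR h).2⟩
  simp only [hF]
  rw [eta_zero hηsupp this, Real.zero_rpow (by linarith), mul_zero]

lemma key_est {N : ℕ} {Ω : Set (Euc N)} (hΩ : IsConeDomain N Ω)
    {lam1 : ℝ} {φ : Euc N → ℝ} (hphi : DirichletEigenpair N Ω lam1 φ)
    {α p q ρ μ : ℝ} (hρ : 0 < ρ)
    {u : Euc N → ℝ} (hu : IsPosSolE N ρ μ α p q Ω u)
    {η : ℝ → ℝ} (hη : ContDiff ℝ 2 η)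
    (hη01 : ∀ t, 0 ≤ η t ∧ η t ≤ 1) (hηsupp : tsupport η ⊆ Set.Icc 1 4)
    {lam m : ℝ} (hlam : 4 < lam) (hm0 : 0 ≤ m) (hm1 : m < 1)
    {R : ℝ} (hR : ρ < R) {M : ℝ} (hM : 0 ≤ M)
    (hrad : ∀ x : Euc N, x ≠ 0 →
      ContDiffAt ℝ 2 (fun y : Euc N => η (‖y‖ / R) ^ lam) x ∧
      |lap N (fun y : Euc N => η (‖y‖ / R) ^ lam) x| ≤ M * (R ^ 2)⁻¹ * η (‖x‖ / R) ^ (lam - 2) ∧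
      ∃ c : ℝ, ∀ i, pd i (fun y : Euc N => η (‖y‖ / R) ^ lam) x = c * x i)
    {κ : ℝ} (hκ : ∀ x ∈ coneGT N ρ Ω, ‖x‖ / R ∈ Set.Icc (1:ℝ) 4 →
      κ ≤ (rieszConv N α ρ Ω (fun y => u y ^ p) x).toReal)
    {ε : ℝ} (hε : 0 < ε) {h : ℝ → ℝ} (hh : ContDiff ℝ 2 h) (hh0 : ∀ t ≤ ε, h t = 0)
    (hh1 : ∀ t, 0 ≤ t → 0 ≤ h t ∧ h t ≤ t) (hhd : ∀ t, 0 ≤ deriv h t ∧ deriv h t ≤ 1)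
    (hhdd : ∀ t, 0 ≤ deriv (deriv h) t) :
    IntegrableOn (fun x => u x ^ (q - m) * (h (φ (‖x‖⁻¹ • x)) * η (‖x‖ / R) ^ lam))
      (coneGT N ρ Ω) ∧
    (1 - m) * κ * ∫ x in coneGT N ρ Ω, u x ^ (q - m) * (h (φ (‖x‖⁻¹ • x)) * η (‖x‖ / R) ^ lam)
      ≤ ((1 - m) * |μ| + |lam1| + M) * (R ^ 2)⁻¹ *
        ∫ x in coneGT N ρ Ω, u x ^ (1 - m) * φ (‖x‖⁻¹ • x) * η (‖x‖ / R) ^ (lam - 2) := by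
  obtain ⟨hu2, huc, hpos, hfin, hineq⟩ := hu
  have hR0 : 0 < R := hρ.trans hR
  set U := coneGT N ρ Ω with hUdef
  have hUo : IsOpen U := coneGT_isOpen hΩ hρ.le
  have hUm := hUo.measurableSet
  have hUcone : U ⊆ cone N Ω := coneGT_sub hρ.le
  have hconeo : IsOpen (cone N Ω) := by rw [← coneGT_zero]; exact coneGT_isOpen hΩ le_rfl
  set Φ : Euc N → ℝ := fun x => φ (‖x‖⁻¹ • x) with hΦ
  set G : Euc N → ℝ := fun x => η (‖x‖ / R) ^ lam with hG
  set v : Euc N → ℝ := fun x => u x ^ (1 - m) with hv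
  set T : Euc N → ℝ := fun x => v x * Φ x * η (‖x‖ / R) ^ (lam - 2) with hT
  have hTint : IntegrableOn T U :=
    rhs_integrable hΩ hphi hρ huc hpos hη.continuous hη01 hηsupp hlam hm1 hR0
  set ψ : Euc N → ℝ := U.indicator (fun x => h (Φ x) * G x) with hψ
  set K : Set (Euc N) := {x | ‖x‖ ∈ Set.Icc R (4 * R) ∧ ‖x‖⁻¹ • x ∈ closure Ω ∧ ε ≤ Φ x} with hK
  -- compactness of K
  have hKU : K ⊆ U := by
    rintro x ⟨hx1, hx2, hx3⟩
    refine ⟨lt_of_lt_of_le hR hx1.1, ?_⟩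
    by_contra hc
    have := hphi.bdryZero _ ⟨hx2, hc⟩
    simp only [hΦ] at hx3
    linarith
  have hKc : IsCompact K := by
    refine Metric.isCompact_of_isClosed_isBounded ?_ ?_
    · set A : Set (Euc N) := {x | ‖x‖ ∈ Set.Icc R (4 * R)} with hA
      have hAc : IsClosed A := isClosed_Icc.preimage continuous_norm
      have hcn : ContinuousOn (fun x : Euc N => ‖x‖⁻¹ • x) A := by
        intro x hx
        have hx0 : ‖x‖ ≠ 0 := by have := hx.1; linarith
        exact ((continuousAt_id.norm.inv₀ hx0).smul continuousAt_id).continuousWithinAt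
      have hBc : IsClosed (A ∩ (fun x : Euc N => ‖x‖⁻¹ • x) ⁻¹' (closure Ω)) :=
        hcn.preimage_isClosed_of_isClosed hAc isClosed_closure
      have hcΦ : ContinuousOn Φ (A ∩ (fun x : Euc N => ‖x‖⁻¹ • x) ⁻¹' (closure Ω)) :=
        hphi.contOn.comp (hcn.mono inter_subset_left) fun x hx => hx.2
      have := hcΦ.preimage_isClosed_of_isClosed hBc (isClosed_Ici (a := ε))
      have hKe : K = A ∩ (fun x : Euc N => ‖x‖⁻¹ • x) ⁻¹' (closure Ω) ∩ Φ ⁻¹' (Set.Ici ε) := by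
        apply Set.Subset.antisymm
        · rintro x ⟨h1, h2, h3⟩; exact ⟨⟨h1, h2⟩, h3⟩
        · rintro x ⟨⟨h1, h2⟩, h3⟩; exact ⟨h1, h2, h3⟩
      rw [hKe]; exact this
    · refine (Metric.isBounded_closedBall (x := (0 : Euc N)) (r := 4 * R)).subset ?_
      intro x hx
      simpa using hx.1.2
  have hψ0 : ∀ x, x ∉ K → ψ x = 0 := by
    intro x hx
    by_cases hxU : x ∈ U
    · simp only [hψ, indicator_of_mem hxU]
      by_cases hx1 : ‖x‖ / R ∈ Set.Icc (1:ℝ) 4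
      · have : Φ x ≤ ε := by
          by_contra hc
          push Not at hc
          exact hx ⟨annulus hR0 hx1, subset_closure hxU.2, hc.le⟩
        rw [hh0 _ this, zero_mul]
      · simp only [hG]
        rw [eta_zero hηsupp hx1, Real.zero_rpow (by linarith), mul_zero]
    · simp [hψ, hxU]
  have hne : ∀ x ∈ U, x ≠ 0 := fun x hx => (hUcone hx).1
  have hΦcd : ∀ x ∈ U, ContDiffAt ℝ 2 Φ x := fun x hx =>
    hphi.smoothExt.contDiffAt (hconeo.mem_nhds (hUcone hx))
  have hhΦ : ∀ x ∈ U, ContDiffAt ℝ 2 (fun y => h (Φ y)) x := fun x hx =>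
    hh.contDiffAt.comp x (hΦcd x hx)
  have hGcd : ∀ x ∈ U, ContDiffAt ℝ 2 G x := fun x hx => (hrad x (hne x hx)).1
  have hψev : ∀ x ∈ U, ψ =ᶠ[nhds x] fun y => h (Φ y) * G y := fun x hx => by
    filter_upwards [hUo.mem_nhds hx] with y hy
    simp [hψ, hy]
  have hψcd : ContDiffOn ℝ 2 ψ U := fun x hx =>
    (((hhΦ x hx).mul (hGcd x hx)).congr_of_eventuallyEq (hψev x hx)).contDiffWithinAt
  have hucd : ∀ x ∈ U, ContDiffAt ℝ 2 u x := fun x hx => hu2.contDiffAt (hUo.mem_nhds hx)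
  have hrp : ∀ t : ℝ, 0 < t → ContDiffAt ℝ 2 (fun s : ℝ => s ^ (1 - m)) t := fun t ht =>
    Real.contDiffAt_rpow_const (n := 2) (Or.inl ht.ne')
  have hvcd : ContDiffOn ℝ 2 v U := fun x hx =>
    ((hrp _ (hpos x hx)).comp x (hucd x hx)).contDiffWithinAt
  obtain ⟨gi1, gi2, gE⟩ := green hUo hKc hKU hvcd hψcd hψ0
  -- integrability of the left-hand side
  have hL : Integrable (fun x => u x ^ (q - m) * ψ x) :=
    integrable_mul_cs hUo hKc hKU
      (ContinuousOn.rpow_const hu2.continuousOn fun x hx => Or.inl (hpos x hx).ne')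
      hψcd.continuousOn hψ0
  have hLeq : (fun x => u x ^ (q - m) * ψ x) =
      U.indicator (fun x => u x ^ (q - m) * (h (Φ x) * G x)) := by
    ext x
    by_cases hx : x ∈ U <;> simp [hψ, hx]
  have hL' : IntegrableOn (fun x => u x ^ (q - m) * (h (Φ x) * G x)) U := by
    rw [← integrable_indicator_iff hUm, ← hLeq]; exact hL
  refine ⟨hL', ?_⟩
  have hLint : ∫ x in U, u x ^ (q - m) * (h (Φ x) * G x) = ∫ x, u x ^ (q - m) * ψ x := by
    rw [hLeq, integral_indicator hUm]
  have hTI : Integrable (U.indicator T) := (integrable_indicator_iff hUm).2 hTint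
  have hTint' : ∫ x in U, T x = ∫ x, U.indicator T x := (integral_indicator hUm).symm
  change (1 - m) * κ * ∫ x in U, u x ^ (q - m) * (h (Φ x) * G x) ≤
    ((1 - m) * |μ| + |lam1| + M) * (R ^ 2)⁻¹ * ∫ x in U, T x
  rw [hLint, hTint']
  -- basic bounds
  have hinv : ∀ x : Euc N, R ≤ ‖x‖ → ‖x‖ ^ (-(2:ℝ)) ≤ (R ^ 2)⁻¹ := by
    intro x hx
    rw [Real.rpow_neg (norm_nonneg _), Real.rpow_two]
    gcongr
  have hinv0 : ∀ x : Euc N, 0 ≤ ‖x‖ ^ (-(2:ℝ)) := fun x => Real.rpow_nonneg (norm_nonneg _) _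
  have hG0 : ∀ x, 0 ≤ G x := fun x => Real.rpow_nonneg (hη01 _).1 _
  have hGle : ∀ x, G x ≤ η (‖x‖ / R) ^ (lam - 2) := by
    intro x
    by_cases h0 : η (‖x‖ / R) = 0
    · simp only [hG, h0]
      rw [Real.zero_rpow (by linarith), Real.zero_rpow (by linarith)]
    · exact Real.rpow_le_rpow_of_exponent_ge (lt_of_le_of_ne (hη01 _).1 (Ne.symm h0)) (hη01 _).2
        (by linarith)
  have hR2 : 0 ≤ (R ^ 2)⁻¹ := by positivity
  -- first pointwise inequality
  have P1 : ∀ x, (1 - m) * κ * (u x ^ (q - m) * ψ x) ≤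
      -(lap N v x * ψ x) + (1 - m) * |μ| * (R ^ 2)⁻¹ * U.indicator T x := by
    intro x
    by_cases hxU : x ∈ U
    swap
    · simp [hψ, hxU]
    have hux := hpos x hxU
    have hΦ0 : 0 < Φ x := hphi.pos _ hxU.2
    have hv0 : 0 ≤ v x := Real.rpow_nonneg hux.le _
    have hT0 : 0 ≤ T x := mul_nonneg (mul_nonneg hv0 hΦ0.le) (Real.rpow_nonneg (hη01 _).1 _)
    rw [indicator_of_mem hxU]
    by_cases hx1 : ‖x‖ / R ∈ Set.Icc (1:ℝ) 4
    swap
    · have : ψ x = 0 := by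
        simp only [hψ, indicator_of_mem hxU, hG]
        rw [eta_zero hηsupp hx1, Real.zero_rpow (by linarith), mul_zero]
      rw [this]
      have : 0 ≤ (1 - m) * |μ| * (R ^ 2)⁻¹ * T x :=
        mul_nonneg (mul_nonneg (mul_nonneg (by linarith) (abs_nonneg _)) hR2) hT0
      linarith
    have hψx : ψ x = h (Φ x) * G x := by simp [hψ, hxU]
    have hψn : 0 ≤ ψ x := by rw [hψx]; exact mul_nonneg (hh1 _ hΦ0.le).1 (hG0 x)
    have hψle : ψ x ≤ Φ x * η (‖x‖ / R) ^ (lam - 2) := by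
      rw [hψx]; exact mul_le_mul (hh1 _ hΦ0.le).2 (hGle x) (hG0 x) hΦ0.le
    have hlap : lap N v x = (1 - m) * u x ^ (-m) * lap N u x +
        (1 - m) * (-m * u x ^ (-m - 1)) * ∑ i, pd i u x ^ 2 := by
      have e : (1 - m) - 1 = -m := by ring
      have d1 : ∀ t : ℝ, 0 < t → HasDerivAt (fun s : ℝ => s ^ (1 - m)) ((1 - m) * t ^ (-m)) t := by
        intro t ht
        have := Real.hasDerivAt_rpow_const (x := t) (p := 1 - m) (Or.inl ht.ne')
        rwa [e] at this
      have d2 : HasDerivAt (fun t : ℝ => (1 - m) * t ^ (-m))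
          ((1 - m) * (-m * u x ^ (-m - 1))) (u x) :=
        (Real.hasDerivAt_rpow_const (Or.inl hux.ne')).const_mul _
      exact lap_comp (f := fun s : ℝ => s ^ (1 - m)) (f' := fun t => (1 - m) * t ^ (-m))
        (hrp _ hux) ((lt_mem_nhds hux).mono fun t ht => d1 t ht) d2 (hucd x hxU)
    have hS : 0 ≤ (1 - m) * (m * u x ^ (-m - 1)) * ∑ i, pd i u x ^ 2 := by
      have : 0 ≤ ∑ i, pd i u x ^ 2 := Finset.sum_nonneg fun i _ => sq_nonneg _
      have : 0 ≤ u x ^ (-m - 1) := Real.rpow_nonneg hux.le _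
      have : 0 ≤ 1 - m := by linarith
      positivity
    have hI := hineq x hxU
    have hκx := hκ x hxU hx1
    have hum0 : 0 ≤ u x ^ (-m) := Real.rpow_nonneg hux.le _
    have huq0 : 0 ≤ u x ^ q := Real.rpow_nonneg hux.le _
    have h1 : κ * u x ^ q ≤ -lap N u x - μ * ‖x‖ ^ (-(2:ℝ)) * u x :=
      (mul_le_mul_of_nonneg_right hκx huq0).trans hI
    have eq1 : u x ^ (q - m) = u x ^ q * u x ^ (-m) := by
      rw [← Real.rpow_add hux]; congr 1
    have eq2 : v x = u x * u x ^ (-m) := by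
      simp only [hv]
      rw [sub_eq_add_neg, Real.rpow_add hux, Real.rpow_one]
    have h2 : κ * u x ^ (q - m) ≤ -(u x ^ (-m) * lap N u x) + |μ| * (R ^ 2)⁻¹ * v x := by
      have a1 := mul_le_mul_of_nonneg_right h1 hum0
      have a2 : -μ * ‖x‖ ^ (-(2:ℝ)) * v x ≤ |μ| * (R ^ 2)⁻¹ * v x := by
        refine mul_le_mul_of_nonneg_right ?_ hv0
        exact mul_le_mul (neg_le_abs μ) (hinv x (annulus hR0 hx1).1) (hinv0 x) (abs_nonneg _)
      rw [eq2] at a2 ⊢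
      rw [eq1]
      nlinarith
    have h3 : (1 - m) * κ * u x ^ (q - m) ≤ -lap N v x + (1 - m) * |μ| * (R ^ 2)⁻¹ * v x := by
      have := mul_le_mul_of_nonneg_left h2 (by linarith : 0 ≤ 1 - m)
      rw [hlap]
      nlinarith
    have h4 := mul_le_mul_of_nonneg_right h3 hψn
    have h5 : (1 - m) * |μ| * (R ^ 2)⁻¹ * v x * ψ x ≤ (1 - m) * |μ| * (R ^ 2)⁻¹ * T x := by
      have : v x * ψ x ≤ T x := by
        simp only [hT]
        rw [mul_assoc]
        exact mul_le_mul_of_nonneg_left hψle hv0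
      have c0 : 0 ≤ (1 - m) * |μ| * (R ^ 2)⁻¹ :=
        mul_nonneg (mul_nonneg (by linarith) (abs_nonneg _)) hR2
      have := mul_le_mul_of_nonneg_left this c0
      linarith
    linarith
  -- second pointwise inequality
  have P2 : ∀ x, -(v x * lap N ψ x) ≤ (|lam1| + M) * (R ^ 2)⁻¹ * U.indicator T x := by
    intro x
    by_cases hxU : x ∈ U
    swap
    · have hxK : x ∉ K := fun hk => hxU (hKU hk)
      have : ψ =ᶠ[nhds x] fun _ => 0 := by
        filter_upwards [hKc.isClosed.isOpen_compl.mem_nhds hxK] with y hy using hψ0 y hy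
      rw [lap_congr this]
      simp [lap, hxU]
    have hux := hpos x hxU
    have hΦ0 : 0 < Φ x := hphi.pos _ hxU.2
    have hv0 : 0 ≤ v x := Real.rpow_nonneg hux.le _
    rw [indicator_of_mem hxU, lap_congr (hψev x hxU), lap_mul (hhΦ x hxU) (hGcd x hxU)]
    obtain ⟨-, hlG, c, hc⟩ := hrad x (hne x hxU)
    have hdh : ∀ t, HasDerivAt h (deriv h t) t := fun t =>
      ((hh.differentiable (by norm_num)) t).hasDerivAt
    have hdh2 : ∀ t, HasDerivAt (deriv h) (deriv (deriv h) t) t := fun t =>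
      (hh.differentiable_deriv_two t).hasDerivAt
    have hΦd := (hΦcd x hxU).differentiableAt (by norm_num : (2 : WithTop ℕ∞) ≠ 0)
    have hcross : ∑ i, pd i (fun y => h (Φ y)) x * pd i G x = 0 := by
      have he := homog_euler hΦd
      have : ∀ i, pd i (fun y => h (Φ y)) x * pd i G x =
          (deriv h (Φ x) * c) * (pd i Φ x * x i) := by
        intro i
        rw [pd_comp i (hdh _) hΦd, hc]; ring
      simp only [this]
      rw [← Finset.mul_sum, he, mul_zero]
    have hlh : lap N (fun y => h (Φ y)) x =
        deriv h (Φ x) * (-lam1 * ‖x‖ ^ (-(2:ℝ)) * Φ x) +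
          deriv (deriv h) (Φ x) * ∑ i, pd i Φ x ^ 2 := by
      rw [lap_comp hh.contDiffAt (Filter.Eventually.of_forall hdh) (hdh2 _) (hΦcd x hxU)]
      rw [hphi.eigen x (hUcone hxU)]
    rw [hcross]
    set E := η (‖x‖ / R) ^ (lam - 2) with hE
    have hE0 : 0 ≤ E := Real.rpow_nonneg (hη01 _).1 _
    have t1 : -(G x * lap N (fun y => h (Φ y)) x) ≤ |lam1| * (R ^ 2)⁻¹ * Φ x * E := by
      by_cases hx1 : ‖x‖ / R ∈ Set.Icc (1:ℝ) 4
      swap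
      · have : G x = 0 := by
          simp only [hG]
          rw [eta_zero hηsupp hx1, Real.zero_rpow (by linarith)]
        rw [this, zero_mul, neg_zero]
        positivity
      have s0 : 0 ≤ deriv (deriv h) (Φ x) * ∑ i, pd i Φ x ^ 2 :=
        mul_nonneg (hhdd _) (Finset.sum_nonneg fun i _ => sq_nonneg _)
      have s1 : -lap N (fun y => h (Φ y)) x ≤ |lam1| * (R ^ 2)⁻¹ * Φ x := by
        have : deriv h (Φ x) * (lam1 * ‖x‖ ^ (-(2:ℝ)) * Φ x) ≤
            1 * (|lam1| * (R ^ 2)⁻¹ * Φ x) := by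
          have b : lam1 * ‖x‖ ^ (-(2:ℝ)) * Φ x ≤ |lam1| * (R ^ 2)⁻¹ * Φ x :=
            mul_le_mul_of_nonneg_right (mul_le_mul (le_abs_self _) (hinv x (annulus hR0 hx1).1)
              (hinv0 x) (abs_nonneg _)) hΦ0.le
          calc deriv h (Φ x) * (lam1 * ‖x‖ ^ (-(2:ℝ)) * Φ x)
              ≤ deriv h (Φ x) * (|lam1| * (R ^ 2)⁻¹ * Φ x) :=
                mul_le_mul_of_nonneg_left b (hhd _).1
            _ ≤ _ := mul_le_mul_of_nonneg_right (hhd _).2 (by positivity)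
        rw [hlh]
        linarith
      calc -(G x * lap N (fun y => h (Φ y)) x) = G x * (-lap N (fun y => h (Φ y)) x) := by ring
        _ ≤ G x * (|lam1| * (R ^ 2)⁻¹ * Φ x) := mul_le_mul_of_nonneg_left s1 (hG0 x)
        _ ≤ E * (|lam1| * (R ^ 2)⁻¹ * Φ x) := mul_le_mul_of_nonneg_right (hGle x) (by positivity)
        _ = _ := by ring
    have t2 : -(h (Φ x) * lap N G x) ≤ M * (R ^ 2)⁻¹ * Φ x * E := by
      have b1 : -lap N G x ≤ M * (R ^ 2)⁻¹ * E := (neg_le_abs _).trans hlG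
      calc -(h (Φ x) * lap N G x) = h (Φ x) * (-lap N G x) := by ring
        _ ≤ h (Φ x) * (M * (R ^ 2)⁻¹ * E) := mul_le_mul_of_nonneg_left b1 (hh1 _ hΦ0.le).1
        _ ≤ Φ x * (M * (R ^ 2)⁻¹ * E) :=
          mul_le_mul_of_nonneg_right (hh1 _ hΦ0.le).2 (by positivity)
        _ = _ := by ring
    have t3 := mul_le_mul_of_nonneg_left (add_le_add t1 t2) hv0
    have hTx : T x = v x * Φ x * E := rfl
    rw [hTx]
    linarith
  -- integrate
  have J1 : ∫ x, (1 - m) * κ * (u x ^ (q - m) * ψ x) ≤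
      ∫ x, (-(lap N v x * ψ x) + (1 - m) * |μ| * (R ^ 2)⁻¹ * U.indicator T x) :=
    integral_mono (hL.const_mul _) (gi1.neg.add (hTI.const_mul _)) P1
  have J2 : ∫ x, -(v x * lap N ψ x) ≤ ∫ x, (|lam1| + M) * (R ^ 2)⁻¹ * U.indicator T x :=
    integral_mono gi2.neg (hTI.const_mul _) P2
  have J3 : ∫ x, (-(lap N v x * ψ x) + (1 - m) * |μ| * (R ^ 2)⁻¹ * U.indicator T x) =
      (∫ x, -(lap N v x * ψ x)) + ∫ x, (1 - m) * |μ| * (R ^ 2)⁻¹ * U.indicator T x :=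
    integral_add gi1.neg (hTI.const_mul _)
  rw [J3, integral_const_mul, integral_const_mul, integral_neg, gE] at J1
  rw [integral_const_mul, integral_neg] at J2
  linarith

lemma riesz_lower {N : ℕ} (hN : 2 ≤ N) {Ω : Set (Euc N)} (hΩ : IsConeDomain N Ω)
    {α p ρ : ℝ} (hα : 0 ≤ α) (hρ : 0 < ρ) {u : Euc N → ℝ}
    (hpos : ∀ x ∈ coneGT N ρ Ω, 0 < u x) {R : ℝ} (hR : 0 < R) {x : Euc N}
    (hx1 : ‖x‖ / R ∈ Set.Icc (1:ℝ) 4) :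
    ENNReal.ofReal ((8 * R) ^ (-α)) *
      ∫⁻ y in coneGT N ρ Ω ∩ {y | ‖y‖ / R ∈ Set.Icc (1:ℝ) 4}, ENNReal.ofReal (u y ^ p)
      ≤ rieszConv N α ρ Ω (fun y => u y ^ p) x := by
  have hSm : MeasurableSet (coneGT N ρ Ω ∩ {y : Euc N | ‖y‖ / R ∈ Set.Icc (1:ℝ) 4}) := by
    refine (coneGT_isOpen hΩ hρ.le).measurableSet.inter ?_
    exact (isClosed_Icc.preimage (continuous_norm.div_const R)).measurableSet
  unfold rieszConv
  rw [← lintegral_const_mul' _ _ ENNReal.ofReal_ne_top]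
  refine le_trans ?_ (lintegral_mono_set (inter_subset_left (t := {y : Euc N | ‖y‖ / R ∈ Set.Icc (1:ℝ) 4})))
  have : Nonempty (Fin N) := ⟨⟨0, by omega⟩⟩
  have hae : ∀ᵐ y : Euc N, y ≠ x := by
    have : (volume : Measure (Euc N)) {x} = 0 := measure_singleton x
    exact compl_mem_ae_iff.2 this
  refine lintegral_mono_ae ((ae_restrict_iff' hSm).2 ?_)
  filter_upwards [hae] with y hyx hy
  rw [← ENNReal.ofReal_mul (by positivity)]
  apply ENNReal.ofReal_le_ofReal
  rw [mul_comm]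
  refine mul_le_mul_of_nonneg_left ?_ (Real.rpow_nonneg (hpos y hy.1).le _)
  have hd : 0 < ‖x - y‖ := norm_pos_iff.2 (sub_ne_zero.2 hyx.symm)
  have hd2 : ‖x - y‖ ≤ 8 * R := by
    have := norm_sub_le x y
    have := (annulus hR hx1).2
    have := (annulus hR hy.2).2
    linarith
  exact Real.rpow_le_rpow_of_nonpos hd hd2 (by linarith)

lemma sq_rpow_half {a : ℝ} (ha : 0 ≤ a) (s : ℝ) : (a ^ (s / 2)) ^ (2:ℝ) = a ^ s := by
  rw [← Real.rpow_mul ha]; congr 1; ring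

/-- Proposition 3.1: a priori estimate for positive solutions of `(E)`. -/
theorem a_priori_estimate
    (N : ℕ) (hN : 2 ≤ N) (Ω : Set (Euc N)) (hΩ : IsConeDomain N Ω)
    (lam1 : ℝ) (φ : Euc N → ℝ) (hphi : DirichletEigenpair N Ω lam1 φ)
    (α p q ρ μ : ℝ) (hα : 0 ≤ α) (hαN : α < N) (hp : 0 < p) (hq : 0 < q) (hρ : 0 < ρ)
    (u : Euc N → ℝ) (hu : IsPosSolE N ρ μ α p q Ω u)
    (η : ℝ → ℝ) (hη : ContDiff ℝ 2 η) (hηc : HasCompactSupport η)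
    (hη01 : ∀ t, 0 ≤ η t ∧ η t ≤ 1) (hηsupp : tsupport η ⊆ Set.Icc 1 4)
    (hηone : ∀ t ∈ Set.Icc (2:ℝ) 3, η t = 1)
    (lam m : ℝ) (hlam : 4 < lam) (hm0 : 0 ≤ m) (hm1 : m < 1) :
    ∃ C > 0, ∀ R : ℝ, max ρ (Real.exp 1) < R →
      (∫ x in coneGT N ρ Ω,
          u x ^ ((p + q - m) / 2) * φ (‖x‖⁻¹ • x) ^ ((1:ℝ)/2) * η (‖x‖ / R) ^ (lam / 2)) ^ 2 ≤
        C * R ^ (α - 2) *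
          ∫ x in coneGT N ρ Ω,
            u x ^ (1 - m) * φ (‖x‖⁻¹ • x) * η (‖x‖ / R) ^ (lam - 2) := by
  obtain ⟨M, hM, hrad⟩ := radial_bound (N := N) hη hη01 hηsupp hlam
  have hu' := hu
  obtain ⟨hu2, huc, hpos, hfin, hineq⟩ := hu'
  set C' := (1 - m) * |μ| + |lam1| + M with hC'
  have hm1' : 0 < 1 - m := by linarith
  have hC'0 : 0 ≤ C' := by positivity
  refine ⟨(C' + 1) * 8 ^ α / (1 - m), by positivity, ?_⟩
  intro R hRmax
  have hR : ρ < R := (le_max_left _ _).trans_lt hRmax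
  have hR0 : 0 < R := hρ.trans hR
  set U := coneGT N ρ Ω with hUdef
  have hUo : IsOpen U := coneGT_isOpen hΩ hρ.le
  have hUm := hUo.measurableSet
  set A : Set (Euc N) := {y | ‖y‖ / R ∈ Set.Icc (1:ℝ) 4} with hA
  have hAm : MeasurableSet A := (isClosed_Icc.preimage (continuous_norm.div_const R)).measurableSet
  set Φ : Euc N → ℝ := fun x => φ (‖x‖⁻¹ • x) with hΦ
  have hΦc : ContinuousOn Φ U := hphi.smoothExt.continuousOn.mono (coneGT_sub hρ.le)
  have hΦ0 : ∀ x ∈ U, 0 < Φ x := fun x hx => hphi.pos _ hx.2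
  have hηc : ∀ s : ℝ, 0 < s → Continuous (fun x : Euc N => η (‖x‖ / R) ^ s) := fun s hs =>
    (hη.continuous.comp (continuous_norm.div_const R)).rpow_const fun x => Or.inr hs.le
  have hucon : ∀ s : ℝ, ContinuousOn (fun x => u x ^ s) U := fun s =>
    ContinuousOn.rpow_const hu2.continuousOn fun x hx => Or.inl (hpos x hx).ne'
  set D := ∫ x in U, u x ^ (1 - m) * Φ x * η (‖x‖ / R) ^ (lam - 2) with hD
  have hD0 : 0 ≤ D := setIntegral_nonneg hUm fun x hx =>
    mul_nonneg (mul_nonneg (Real.rpow_nonneg (hpos x hx).le _) (hΦ0 x hx).le)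
      (Real.rpow_nonneg (hη01 _).1 _)
  set B := ∫⁻ y in U ∩ A, ENNReal.ofReal (u y ^ p) with hB
  have hc8 : 0 < (8 * R) ^ (-α) := by positivity
  have hlow : ∀ x ∈ U, ‖x‖ / R ∈ Set.Icc (1:ℝ) 4 →
      ENNReal.ofReal ((8 * R) ^ (-α)) * B ≤ rieszConv N α ρ Ω (fun y => u y ^ p) x :=
    fun x hx hx1 => riesz_lower hN hΩ hα hρ hpos hR0 hx1
  have hBtop : B ≠ ⊤ := by
    by_cases hne : (U ∩ A).Nonempty
    · obtain ⟨x, hx, hx1⟩ := hne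
      intro hBt
      have h1 := (hlow x hx hx1).trans_lt (hfin x hx)
      rw [hBt, ENNReal.mul_top (by simpa using hc8)] at h1
      exact lt_irrefl _ h1
    · rw [Set.not_nonempty_iff_eq_empty] at hne
      rw [hB, hne]
      simp
  set κ := (8 * R) ^ (-α) * B.toReal with hκdef
  have hκ0 : 0 ≤ κ := by positivity
  have hκ : ∀ x ∈ U, ‖x‖ / R ∈ Set.Icc (1:ℝ) 4 →
      κ ≤ (rieszConv N α ρ Ω (fun y => u y ^ p) x).toReal := by
    intro x hx hx1
    have := ENNReal.toReal_mono (hfin x hx).ne (hlow x hx hx1)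
    rwa [ENNReal.toReal_mul, ENNReal.toReal_ofReal hc8.le] at this
  -- the truncations
  have hεn : ∀ n : ℕ, 0 < 1 / ((n : ℝ) + 1) := fun n => by positivity
  choose h hh hh0 hh1 hhd hhdd using fun n : ℕ => exists_trunc (1 / ((n : ℝ) + 1)) (hεn n)
  have hkey := fun n : ℕ => key_est hΩ hphi hρ hu hη hη01 hηsupp hlam hm0 hm1 hR hM
    (hrad R hR0) hκ (hεn n) (hh n) (hh0 n) (fun t ht => ⟨(hh1 n t ht).1, (hh1 n t ht).2.1⟩)
    (hhd n) (hhdd n)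
  set f : ℕ → Euc N → ℝ := fun n x => u x ^ (q - m) * (h n (Φ x) * η (‖x‖ / R) ^ lam) with hf
  have hf0 : ∀ n, ∀ x ∈ U, 0 ≤ f n x := fun n x hx =>
    mul_nonneg (Real.rpow_nonneg (hpos x hx).le _)
      (mul_nonneg (hh1 n _ (hΦ0 x hx).le).1 (Real.rpow_nonneg (hη01 _).1 _))
  have hflim : ∀ x ∈ U, Filter.Tendsto (fun n => f n x) Filter.atTop
      (nhds (u x ^ (q - m) * (Φ x * η (‖x‖ / R) ^ lam))) := by
    intro x hx
    refine Filter.Tendsto.const_mul _ (Filter.Tendsto.mul_const _ ?_)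
    have l1 : Filter.Tendsto (fun n : ℕ => Φ x - 2 * (1 / ((n : ℝ) + 1))) Filter.atTop
        (nhds (Φ x)) := by
      have := (tendsto_one_div_add_atTop_nhds_zero_nat (𝕜 := ℝ)).const_mul 2
      simpa using this.const_sub (Φ x)
    exact tendsto_of_tendsto_of_tendsto_of_le_of_le l1 tendsto_const_nhds
      (fun n => (hh1 n _ (hΦ0 x hx).le).2.2) (fun n => (hh1 n _ (hΦ0 x hx).le).2.1)
  set g : Euc N → ℝ := fun x => u x ^ (q - m) * (Φ x * η (‖x‖ / R) ^ lam) with hg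
  set L := ∫⁻ x in U, ENNReal.ofReal (g x) with hL
  have hκ1 : 0 ≤ (1 - m) * κ := by positivity
  have hfat : ENNReal.ofReal ((1 - m) * κ) * L ≤ ENNReal.ofReal (C' * (R ^ 2)⁻¹ * D) := by
    have e1 : ∀ n, ENNReal.ofReal ((1 - m) * κ) * ∫⁻ x in U, ENNReal.ofReal (f n x) ≤
        ENNReal.ofReal (C' * (R ^ 2)⁻¹ * D) := by
      intro n
      rw [← ofReal_integral_eq_lintegral_ofReal (hkey n).1
        ((ae_restrict_iff' hUm).2 (Filter.Eventually.of_forall (hf0 n))), ← ENNReal.ofReal_mul hκ1]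
      exact ENNReal.ofReal_le_ofReal (hkey n).2
    have e2 : ENNReal.ofReal ((1 - m) * κ) * L =
        ∫⁻ x in U, Filter.liminf (fun n => ENNReal.ofReal ((1 - m) * κ) * ENNReal.ofReal (f n x))
          Filter.atTop := by
      rw [hL, ← lintegral_const_mul' _ _ ENNReal.ofReal_ne_top]
      refine setLIntegral_congr_fun hUm fun x hx => ?_
      refine (Filter.Tendsto.liminf_eq ?_).symm
      exact ENNReal.Tendsto.const_mul (ENNReal.tendsto_ofReal (hflim x hx))
        (Or.inr ENNReal.ofReal_ne_top)
    rw [e2]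
    refine (lintegral_liminf_le' fun n => ?_).trans ?_
    · exact ((hkey n).1.aestronglyMeasurable.aemeasurable.ennreal_ofReal).const_mul _
    · have e3 : ∀ n, ∫⁻ x in U, ENNReal.ofReal ((1 - m) * κ) * ENNReal.ofReal (f n x) ≤
          ENNReal.ofReal (C' * (R ^ 2)⁻¹ * D) := by
        intro n
        rw [lintegral_const_mul' _ _ ENNReal.ofReal_ne_top]
        exact e1 n
      exact (Filter.liminf_le_liminf (Filter.Eventually.of_forall e3)).trans (by simp)
  -- Cauchy-Schwarz
  set F : Euc N → ℝ := fun x =>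
    u x ^ ((p + q - m) / 2) * Φ x ^ ((1:ℝ) / 2) * η (‖x‖ / R) ^ (lam / 2) with hF
  set f1 : Euc N → ℝ≥0∞ := A.indicator (fun x => ENNReal.ofReal (u x ^ (p / 2))) with hf1
  set f2 : Euc N → ℝ≥0∞ := fun x =>
    ENNReal.ofReal (u x ^ ((q - m) / 2) * (Φ x ^ ((1:ℝ) / 2) * η (‖x‖ / R) ^ (lam / 2))) with hf2
  have hf1m : AEMeasurable f1 (volume.restrict U) :=
    (((hucon _).aestronglyMeasurable hUm).aemeasurable.ennreal_ofReal).indicator hAm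
  have hΦhc : ContinuousOn (fun x => Φ x ^ ((1:ℝ) / 2)) U :=
    hΦc.rpow_const fun x hx => Or.inl (hΦ0 x hx).ne'
  have hf2m : AEMeasurable f2 (volume.restrict U) :=
    ((((hucon _).mul (hΦhc.mul (hηc _ (by linarith)).continuousOn)).aestronglyMeasurable
      hUm).aemeasurable.ennreal_ofReal)
  have hFm : AEStronglyMeasurable F (volume.restrict U) :=
    ((((hucon _).mul hΦhc).mul (hηc _ (by linarith)).continuousOn).aestronglyMeasurable hUm)
  have hF0 : ∀ x ∈ U, 0 ≤ F x := fun x hx =>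
    mul_nonneg (mul_nonneg (Real.rpow_nonneg (hpos x hx).le _) (Real.rpow_nonneg (hΦ0 x hx).le _))
      (Real.rpow_nonneg (hη01 _).1 _)
  have hFf : ∀ x ∈ U, ENNReal.ofReal (F x) = (f1 * f2) x := by
    intro x hx
    by_cases hxA : x ∈ A
    · simp only [Pi.mul_apply, hf1, hf2, indicator_of_mem hxA]
      rw [← ENNReal.ofReal_mul (Real.rpow_nonneg (hpos x hx).le _)]
      congr 1
      simp only [hF]
      have : (p + q - m) / 2 = p / 2 + (q - m) / 2 := by ring
      rw [this, Real.rpow_add (hpos x hx)]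
      ring
    · simp only [Pi.mul_apply, hf1, indicator_of_notMem hxA, hF]
      rw [eta_zero hηsupp hxA, Real.zero_rpow (by linarith)]
      simp
  have hI1 : ∫⁻ x in U, f1 x ^ (2:ℝ) = B := by
    have : ∫⁻ x in U, f1 x ^ (2:ℝ) =
        ∫⁻ x in U, A.indicator (fun x => ENNReal.ofReal (u x ^ p)) x := by
      refine setLIntegral_congr_fun hUm fun x hx => ?_
      by_cases hxA : x ∈ A
      · simp only [hf1, indicator_of_mem hxA]
        rw [ENNReal.ofReal_rpow_of_nonneg (Real.rpow_nonneg (hpos x hx).le _) (by norm_num),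
          sq_rpow_half (hpos x hx).le]
      · simp [hf1, hxA]
    rw [this, lintegral_indicator hAm, Measure.restrict_restrict hAm, inter_comm]
  have hI2 : ∫⁻ x in U, f2 x ^ (2:ℝ) = L := by
    refine setLIntegral_congr_fun hUm fun x hx => ?_
    have a1 := Real.rpow_nonneg (hpos x hx).le ((q - m) / 2)
    have a2 := Real.rpow_nonneg (hΦ0 x hx).le ((1:ℝ) / 2)
    have a3 := Real.rpow_nonneg (hη01 (‖x‖ / R)).1 (lam / 2)
    simp only [hf2, hg]
    rw [ENNReal.ofReal_rpow_of_nonneg (mul_nonneg a1 (mul_nonneg a2 a3)) (by norm_num),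
      Real.mul_rpow a1 (mul_nonneg a2 a3), Real.mul_rpow a2 a3, sq_rpow_half (hpos x hx).le,
      sq_rpow_half (hΦ0 x hx).le, sq_rpow_half (hη01 _).1, Real.rpow_one]
  have hCS : (∫⁻ x in U, ENNReal.ofReal (F x)) ^ 2 ≤ B * L := by
    have c1 := ENNReal.lintegral_mul_le_Lp_mul_Lq (volume.restrict U)
      Real.HolderConjugate.two_two hf1m hf2m
    rw [hI1, hI2, ← setLIntegral_congr_fun hUm hFf] at c1
    calc (∫⁻ x in U, ENNReal.ofReal (F x)) ^ 2
        ≤ (B ^ (1 / (2:ℝ)) * L ^ (1 / (2:ℝ))) ^ 2 := by gcongr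
      _ = B * L := by
        rw [mul_pow, ← ENNReal.rpow_natCast, ← ENNReal.rpow_natCast, ← ENNReal.rpow_mul,
          ← ENNReal.rpow_mul]
        norm_num
  -- conclusion
  set c := (1 - m) * (8 * R) ^ (-α) with hc
  have hc0 : 0 < c := by positivity
  have hBL : ENNReal.ofReal c * (B * L) ≤ ENNReal.ofReal (C' * (R ^ 2)⁻¹ * D) := by
    have : ENNReal.ofReal ((1 - m) * κ) = ENNReal.ofReal c * B := by
      rw [hκdef, ← mul_assoc, ENNReal.ofReal_mul hc0.le, ENNReal.ofReal_toReal hBtop]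
    rw [← mul_assoc, ← this]
    exact hfat
  have hJ : ∫ x in U, F x = (∫⁻ x in U, ENNReal.ofReal (F x)).toReal :=
    integral_eq_lintegral_of_nonneg_ae
      ((ae_restrict_iff' hUm).2 (Filter.Eventually.of_forall hF0)) hFm
  have hfinal : c * (∫ x in U, F x) ^ 2 ≤ C' * (R ^ 2)⁻¹ * D := by
    have h1 := (mul_le_mul_right hCS (ENNReal.ofReal c)).trans hBL
    have h2 := ENNReal.toReal_mono ENNReal.ofReal_ne_top h1
    rw [ENNReal.toReal_mul, ENNReal.toReal_pow, ENNReal.toReal_ofReal hc0.le,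
      ENNReal.toReal_ofReal (by positivity), ← hJ] at h2
    exact h2
  change (∫ x in U, F x) ^ 2 ≤ (C' + 1) * 8 ^ α / (1 - m) * R ^ (α - 2) * D
  have hRR : (8 * R) ^ (-α) * (8 ^ α * R ^ (α - 2)) = (R ^ 2)⁻¹ := by
    rw [Real.mul_rpow (by norm_num) hR0.le, Real.rpow_sub hR0, Real.rpow_neg (by norm_num),
      Real.rpow_neg hR0.le, Real.rpow_two]
    have : (0:ℝ) < 8 ^ α := by positivity
    have : 0 < R ^ α := by positivity
    field_simp
  refine le_of_mul_le_mul_left (hfinal.trans ?_) hc0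
  have : c * ((C' + 1) * 8 ^ α / (1 - m) * R ^ (α - 2) * D) = (C' + 1) * (R ^ 2)⁻¹ * D := by
    rw [← hRR, hc]
    field_simp
  rw [this]
  have : 0 ≤ (R ^ 2)⁻¹ * D := by positivity
  nlinarith
end
end
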